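/- Let N ≥ 1, let Ω ⊂ ℝ^N be an open set, let θ ≥ p > 1 and λ, γ > 0, and let s > (p+1)/2 satisfy L(s) < 0. Then there exists a finite constant C (depending only on N, p, θ, s, λ, γ) such that for every pair (u, v) of functions in C²(Ω), positive in Ω, satisfying −Δu = λ(v+1)^p and −Δv = γ(u+1)^θ in Ω and stable, and every y ∈ Ω and R > 0 with the closed ball B_R(y) contained in Ω, one has ∫_{B_{R/2}(y)} (u+1)^θ (v+1)^{s−1} dx ≤ (C/R²) ∫_{B_R(y)} (v+1)^s dx. -/

import Mathlib

open MeasureTheory Metric Real Set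

noncomputable section

/-- The Euclidean Laplacian `Δw(x) = ∑ i, ∂²w/∂xᵢ²(x)` on `ℝ^N`. -/
def lap {N : ℕ} (w : EuclideanSpace ℝ (Fin N) → ℝ) (x : EuclideanSpace ℝ (Fin N)) : ℝ :=
  ∑ i : Fin N,
    fderiv ℝ (fun y => fderiv ℝ w y (EuclideanSpace.single i 1)) x (EuclideanSpace.single i 1)

/-- `φ` is a smooth compactly supported test function with support inside `Ω`. -/
def IsTestFun {N : ℕ} (Ω : Set (EuclideanSpace ℝ (Fin N)))
    (φ : EuclideanSpace ℝ (Fin N) → ℝ) : Prop :=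
  ContDiff ℝ (⊤ : ℕ∞) φ ∧ HasCompactSupport φ ∧ tsupport φ ⊆ Ω

/-- Stability of a classical solution of `-Δu = λ(v+1)^p, -Δv = γ(u+1)^θ` in `Ω`:
`√(λγpθ) ∫_Ω (v+1)^((p-1)/2) (u+1)^((θ-1)/2) φ² ≤ ∫_Ω |∇φ|²` for all test functions. -/
def IsStable {N : ℕ} (Ω : Set (EuclideanSpace ℝ (Fin N))) (lam gam p θ : ℝ)
    (u v : EuclideanSpace ℝ (Fin N) → ℝ) : Prop :=
  ∀ φ : EuclideanSpace ℝ (Fin N) → ℝ, IsTestFun Ω φ →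
    Real.sqrt (lam * gam * p * θ) *
        ∫ x in Ω, (v x + 1) ^ ((p - 1) / 2) * (u x + 1) ^ ((θ - 1) / 2) * φ x ^ 2
      ≤ ∫ x in Ω, ‖gradient φ x‖ ^ 2

/-- `(u,v)` is a positive classical solution of `-Δu = λ(v+1)^p, -Δv = γ(u+1)^θ` in `Ω`. -/
def IsSolution {N : ℕ} (Ω : Set (EuclideanSpace ℝ (Fin N))) (lam gam p θ : ℝ)
    (u v : EuclideanSpace ℝ (Fin N) → ℝ) : Prop :=
  ContDiffOn ℝ 2 u Ω ∧ ContDiffOn ℝ 2 v Ω ∧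
  (∀ x ∈ Ω, 0 < u x) ∧ (∀ x ∈ Ω, 0 < v x) ∧
  (∀ x ∈ Ω, -lap u x = lam * (v x + 1) ^ p) ∧
  (∀ x ∈ Ω, -lap v x = gam * (u x + 1) ^ θ)

/-- The quartic polynomial `L`. -/
def Lpoly (p θ s : ℝ) : ℝ :=
  s ^ 4 - (16 * p * θ * (p + 1) / (θ + 1)) * s ^ 2
    + (16 * p * θ * (p + 1) * (p + θ + 2) / (θ + 1) ^ 2) * s
    - 16 * p * θ * (p + 1) ^ 2 / (θ + 1) ^ 2

/-!
Put `U = u + 1` and `V = v + 1`. On a small ball of radius `r`, superharmonicity of `U` and `V`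
gives a multiple `J` of the average of `U` with `r² J ^ θ ≲ V`, while `U ≤ J + ℓ V ^ σ` for
`σ = (p + 1) / (θ + 1)` and the `ℓ` that makes `U - ℓ V ^ σ` subharmonic wherever it is positive.
A regularised positive part `W` of `U - J` thus satisfies `W ≲ V ^ σ` and `U ≤ W + J`. Testing
stability with `W ^ (q / 2) η` and `V ^ (s / 2) η`, where `q σ = s`, and using the two equations
bounds `∫ ω W ^ q η²` and `∫ ω V ^ s η²`, with `ω = V ^ ((p - 1) / 2) W ^ ((θ - 1) / 2)`, by
multiples of `∫ W ^ (q - 1) V ^ p η²` and `∫ V ^ (s - 1) U ^ θ η²`, up to errors `r⁻² ∫ V ^ s`.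
Replacing `U ^ θ` by a multiple of `W ^ θ` costs another such error, as `J ^ θ ≲ r⁻² V`, and then
both right-hand sides interpolate between the left-hand sides. The product of the two constants is
less than one exactly when `L(s) < 0`, so that everything but the errors can be absorbed.
-/

open scoped Convolution Gradient RealInnerProductSpace

local notation:max "𝔼" N:max => EuclideanSpace ℝ (Fin N)

section Gradient

variable {E : Type*} [NormedAddCommGroup E] [InnerProductSpace ℝ E] [CompleteSpace E]
  {f g : E → ℝ} {x : E}

lemma gradient_mul (hf : DifferentiableAt ℝ f x) (hg : DifferentiableAt ℝ g x) :
    ∇ (fun y => f y * g y) x = f x • ∇ g x + g x • ∇ f x := by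
  refine HasGradientAt.gradient (hasGradientAt_iff_hasFDerivAt.2 ?_)
  simp only [map_add, map_smul, toDual_gradient]
  exact hf.hasFDerivAt.mul hg.hasFDerivAt

lemma gradient_add (hf : DifferentiableAt ℝ f x) (hg : DifferentiableAt ℝ g x) :
    ∇ (fun y => f y + g y) x = ∇ f x + ∇ g x := by
  refine HasGradientAt.gradient (hasGradientAt_iff_hasFDerivAt.2 ?_)
  simp only [map_add, toDual_gradient]
  exact hf.hasFDerivAt.add hg.hasFDerivAt

lemma gradient_comp {F : ℝ → ℝ} {F' : ℝ} (hF : HasDerivAt F F' (f x))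
    (hf : DifferentiableAt ℝ f x) : ∇ (fun y => F (f y)) x = F' • ∇ f x := by
  refine HasGradientAt.gradient (hasGradientAt_iff_hasFDerivAt.2 ?_)
  simp only [map_smul, toDual_gradient]
  exact hF.comp_hasFDerivAt x hf.hasFDerivAt

lemma gradient_comp_add_smul (t : ℝ) (y : E) (hf : DifferentiableAt ℝ f (y + t • x)) :
    ∇ (fun z => f (y + t • z)) x = t • ∇ f (y + t • x) := by
  have h : HasFDerivAt (fun z : E => y + t • z) (t • ContinuousLinearMap.id ℝ E) x :=
    ((hasFDerivAt_id x).const_smul t).const_add y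
  refine HasGradientAt.gradient (hasGradientAt_iff_hasFDerivAt.2 ?_)
  simp only [map_smul, toDual_gradient]
  rw [← ContinuousLinearMap.comp_id (fderiv ℝ f _), ← ContinuousLinearMap.comp_smul]
  exact hf.hasFDerivAt.comp x h

lemma continuous_gradient (hf : ContDiff ℝ 1 f) : Continuous (∇ f) :=
  (InnerProductSpace.toDual ℝ E).symm.continuous.comp (hf.continuous_fderiv one_ne_zero)

lemma gradient_eq_zero_of_notMem_tsupport (hx : x ∉ tsupport f) : ∇ f x = 0 := by
  rw [(notMem_tsupport_iff_eventuallyEq.1 hx).gradient_eq]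
  exact gradient_fun_const x 0

end Gradient

section Laplacian

variable {N : ℕ}

/-- The partial derivative `∂f/∂xᵢ`, in terms of which `lap` is `∑ i, ∂ᵢ ∂ᵢ`. -/
def partialDeriv (i : Fin N) (f : 𝔼 N → ℝ) (x : 𝔼 N) : ℝ :=
  fderiv ℝ f x (EuclideanSpace.single i 1)

variable {f g : 𝔼 N → ℝ}

lemma lap_eq_sum (f : 𝔼 N → ℝ) (x : 𝔼 N) : lap f x = ∑ i, partialDeriv i (partialDeriv i f) x := rfl

lemma gradient_apply (f : 𝔼 N → ℝ) (x : 𝔼 N) (i : Fin N) : ∇ f x i = partialDeriv i f x := by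
  simp [partialDeriv, ← inner_gradient_left, EuclideanSpace.inner_single_right]

lemma inner_gradient_eq_sum (f g : 𝔼 N → ℝ) (x : 𝔼 N) :
    ⟪∇ f x, ∇ g x⟫ = ∑ i, partialDeriv i f x * partialDeriv i g x := by
  simp only [PiLp.inner_apply, gradient_apply, RCLike.inner_apply, conj_trivial,
    mul_comm]

lemma contDiff_partialDeriv {n : WithTop ℕ∞} (i : Fin N) (hf : ContDiff ℝ (n + 1) f) :
    ContDiff ℝ n (partialDeriv i f) :=
  (hf.fderiv_right le_rfl).clm_apply contDiff_const

lemma differentiable_partialDeriv (i : Fin N) (hf : ContDiff ℝ 2 f) :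
    Differentiable ℝ (partialDeriv i f) :=
  (contDiff_partialDeriv (n := 1) i hf).differentiable one_ne_zero

lemma continuous_partialDeriv (i : Fin N) (hf : ContDiff ℝ 1 f) : Continuous (partialDeriv i f) :=
  (hf.continuous_fderiv one_ne_zero).clm_apply continuous_const

lemma continuous_lap (hf : ContDiff ℝ 2 f) : Continuous (lap f) :=
  continuous_finsetSum _ fun i _ => continuous_partialDeriv i (contDiff_partialDeriv (n := 1) i hf)

lemma tsupport_partialDeriv_subset (i : Fin N) : tsupport (partialDeriv i f) ⊆ tsupport f :=
  tsupport_fderiv_apply_subset ℝ _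

lemma lap_eq_zero_of_notMem_tsupport {x : 𝔼 N} (hx : x ∉ tsupport f) : lap f x = 0 :=
  Finset.sum_eq_zero fun i _ =>
    image_eq_zero_of_notMem_tsupport (f := partialDeriv i (partialDeriv i f)) fun h =>
      hx (tsupport_partialDeriv_subset i (tsupport_partialDeriv_subset i h))

lemma lap_congr {x : 𝔼 N} (h : f =ᶠ[nhds x] g) : lap f x = lap g x := by
  refine Finset.sum_congr rfl fun i _ => ?_
  have hi : partialDeriv i f =ᶠ[nhds x] partialDeriv i g :=
    (h.fderiv (𝕜 := ℝ)).mono fun y hy => congrArg (· (EuclideanSpace.single i 1)) hy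
  exact congrArg (· (EuclideanSpace.single i 1)) (hi.fderiv_eq (𝕜 := ℝ))

lemma partialDeriv_mul (i : Fin N) (hf : Differentiable ℝ f) (hg : Differentiable ℝ g) :
    partialDeriv i (fun x => f x * g x) =
      fun x => f x * partialDeriv i g x + g x * partialDeriv i f x := by
  funext x
  simp only [← gradient_apply, gradient_mul (hf x) (hg x), PiLp.add_apply, PiLp.smul_apply,
    smul_eq_mul]

lemma partialDeriv_add (i : Fin N) (hf : Differentiable ℝ f) (hg : Differentiable ℝ g) :
    partialDeriv i (fun x => f x + g x) = fun x => partialDeriv i f x + partialDeriv i g x := by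
  funext x
  simp only [← gradient_apply, gradient_add (hf x) (hg x), PiLp.add_apply]

lemma partialDeriv_comp (i : Fin N) {F F' : ℝ → ℝ} (hF : ∀ x, HasDerivAt F (F' (f x)) (f x))
    (hf : Differentiable ℝ f) :
    partialDeriv i (fun x => F (f x)) = fun x => F' (f x) * partialDeriv i f x := by
  funext x
  simp only [← gradient_apply, gradient_comp (hF x) (hf x), PiLp.smul_apply, smul_eq_mul]

lemma partialDeriv_const_mul (i : Fin N) (c : ℝ) (hf : Differentiable ℝ f) :
    partialDeriv i (fun x => c * f x) = fun x => c * partialDeriv i f x :=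
  partialDeriv_comp i (F' := fun _ => c) (fun _ => by simpa using (hasDerivAt_id _).const_mul c) hf

lemma partialDeriv_comp_add_smul (i : Fin N) (t : ℝ) (y : 𝔼 N) (hf : Differentiable ℝ f) :
    partialDeriv i (fun z => f (y + t • z)) = fun z => t * partialDeriv i f (y + t • z) := by
  funext z
  simp only [← gradient_apply, gradient_comp_add_smul t y (hf _), PiLp.smul_apply, smul_eq_mul]

lemma lap_add (hf : ContDiff ℝ 2 f) (hg : ContDiff ℝ 2 g) (x : 𝔼 N) :
    lap (fun y => f y + g y) x = lap f x + lap g x := by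
  simp only [lap_eq_sum, ← Finset.sum_add_distrib]
  refine Finset.sum_congr rfl fun i _ => ?_
  rw [partialDeriv_add i (hf.differentiable two_ne_zero) (hg.differentiable two_ne_zero),
    partialDeriv_add i (differentiable_partialDeriv i hf) (differentiable_partialDeriv i hg)]

lemma lap_const_mul (c : ℝ) (hf : ContDiff ℝ 2 f) (x : 𝔼 N) :
    lap (fun y => c * f y) x = c * lap f x := by
  simp only [lap_eq_sum, Finset.mul_sum]
  refine Finset.sum_congr rfl fun i _ => ?_
  rw [partialDeriv_const_mul i c (hf.differentiable two_ne_zero),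
    partialDeriv_const_mul i c (differentiable_partialDeriv i hf)]

lemma lap_comp {F F' F'' : ℝ → ℝ} (hF : ∀ x, HasDerivAt F (F' (f x)) (f x))
    (hF' : ∀ x, HasDerivAt F' (F'' (f x)) (f x)) (hf : ContDiff ℝ 2 f) (x : 𝔼 N) :
    lap (fun y => F (f y)) x = F'' (f x) * ‖∇ f x‖ ^ 2 + F' (f x) * lap f x := by
  have hf1 := hf.differentiable two_ne_zero
  have hF'1 : Differentiable ℝ fun y => F' (f y) := fun y =>
    ((hF' y).differentiableAt).comp y (hf1 y)
  simp only [← real_inner_self_eq_norm_sq, inner_gradient_eq_sum, lap_eq_sum, Finset.mul_sum,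
    ← Finset.sum_add_distrib]
  refine Finset.sum_congr rfl fun i _ => ?_
  rw [partialDeriv_comp i hF hf1, partialDeriv_mul i hF'1 (differentiable_partialDeriv i hf),
    partialDeriv_comp i hF' hf1]
  ring

lemma lap_comp_add_smul (t : ℝ) (y z : 𝔼 N) (hf : ContDiff ℝ 2 f) :
    lap (fun z => f (y + t • z)) z = t ^ 2 * lap f (y + t • z) := by
  simp only [lap_eq_sum, Finset.mul_sum]
  refine Finset.sum_congr rfl fun i _ => ?_
  have hfi := differentiable_partialDeriv i hf
  rw [partialDeriv_comp_add_smul i t y (hf.differentiable two_ne_zero),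
    partialDeriv_const_mul i t (by fun_prop), partialDeriv_comp_add_smul i t y hfi]
  ring

lemma lap_norm_sub_sq (x z : 𝔼 N) : lap (fun y => ‖y - x‖ ^ 2) z = 2 * N := by
  have hD (i : Fin N) : partialDeriv i (fun y : 𝔼 N => ‖y - x‖ ^ 2) = fun y => 2 * (y i - x i) := by
    funext y
    have h : HasFDerivAt (fun y : 𝔼 N => ‖y - x‖ ^ 2) _ y :=
      ((hasFDerivAt_id y).sub_const x).norm_sq
    simp [partialDeriv, h.fderiv, EuclideanSpace.inner_single_right]
  have hDD (i : Fin N) : partialDeriv i (fun y : 𝔼 N => 2 * (y i - x i)) z = 2 := by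
    have h : HasFDerivAt (fun y : 𝔼 N => 2 * (y i - x i)) _ z :=
      (((EuclideanSpace.proj (𝕜 := ℝ) i).hasFDerivAt).sub_const (x i)).const_mul 2
    simp [partialDeriv, h.fderiv]
  simp only [lap_eq_sum, hD, hDD, Finset.sum_const, Finset.card_univ, Fintype.card_fin,
    nsmul_eq_mul, mul_comm]

lemma integral_mul_partialDeriv (i : Fin N) (hf : ContDiff ℝ 1 f) (hg : ContDiff ℝ 1 g)
    (hc : HasCompactSupport f ∨ HasCompactSupport g) :
    ∫ x, f x * partialDeriv i g x = -∫ x, partialDeriv i f x * g x := by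
  have hc' (a b : 𝔼 N → ℝ) (ha : tsupport a ⊆ tsupport f) (hb : tsupport b ⊆ tsupport g) :
      HasCompactSupport fun x => a x * b x :=
    hc.elim (fun h => (h.mono' (subset_closure.trans ha)).mul_right)
      fun h => (h.mono' (subset_closure.trans hb)).mul_left
  refine integral_mul_fderiv_eq_neg_fderiv_mul_of_integrable
    (((continuous_partialDeriv i hf).mul hg.continuous).integrable_of_hasCompactSupport ?_)
    ((hf.continuous.mul (continuous_partialDeriv i hg)).integrable_of_hasCompactSupport ?_)
    ((hf.continuous.mul hg.continuous).integrable_of_hasCompactSupport ?_)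
    (fun x _ => hf.differentiable one_ne_zero x) (fun x _ => hg.differentiable one_ne_zero x)
  · exact hc' _ _ (tsupport_partialDeriv_subset i) subset_rfl
  · exact hc' _ _ subset_rfl (tsupport_partialDeriv_subset i)
  · exact hc' _ _ subset_rfl subset_rfl

lemma integral_inner_gradient_eq_neg (hf : ContDiff ℝ 1 f) (hg : ContDiff ℝ 2 g)
    (hc : HasCompactSupport f ∨ HasCompactSupport g) :
    ∫ x, ⟪∇ f x, ∇ g x⟫ = -∫ x, f x * lap g x := by
  have hg1 (i : Fin N) : ContDiff ℝ 1 (partialDeriv i g) := contDiff_partialDeriv (n := 1) i hg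
  have hgs (i : Fin N) : HasCompactSupport g → HasCompactSupport (partialDeriv i g) :=
    fun h => h.mono' (subset_closure.trans (tsupport_partialDeriv_subset i))
  have hfs (i : Fin N) : HasCompactSupport f → HasCompactSupport (partialDeriv i f) :=
    fun h => h.mono' (subset_closure.trans (tsupport_partialDeriv_subset i))
  simp only [inner_gradient_eq_sum, lap_eq_sum, Finset.mul_sum]
  rw [integral_finsetSum, integral_finsetSum, ← Finset.sum_neg_distrib]
  · refine Finset.sum_congr rfl fun i _ => ?_
    rw [integral_mul_partialDeriv i hf (hg1 i) (hc.imp_right (hgs i)), neg_neg]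
  · intro i _
    have hcont := hf.continuous.mul (continuous_partialDeriv i (hg1 i))
    refine hcont.integrable_of_hasCompactSupport ?_
    exact hc.elim (fun h => h.mul_right) fun h => HasCompactSupport.mul_left <|
      (hgs i h).mono' (subset_closure.trans (tsupport_partialDeriv_subset i))
  · intro i _
    have hcont := (continuous_partialDeriv i hf).mul (hg1 i).continuous
    refine hcont.integrable_of_hasCompactSupport ?_
    exact hc.elim (fun h => (hfs i h).mul_right) fun h => (hgs i h).mul_left

lemma lap_rpow {W : 𝔼 N → ℝ} (hW : ContDiff ℝ 2 W) (hpos : ∀ x, 0 < W x) (a : ℝ) (x : 𝔼 N) :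
    lap (fun y => W y ^ a) x =
      a * (a - 1) * W x ^ (a - 2) * ‖∇ W x‖ ^ 2 + a * W x ^ (a - 1) * lap W x := by
  refine lap_comp (F' := fun t => a * t ^ (a - 1)) (F'' := fun t => a * (a - 1) * t ^ (a - 2))
    (fun y => Real.hasDerivAt_rpow_const (Or.inl (hpos y).ne')) (fun y => ?_) hW x
  have h := (Real.hasDerivAt_rpow_const (p := a - 1) (Or.inl (hpos y).ne')).const_mul a
  rwa [sub_sub, one_add_one_eq_two, ← mul_assoc] at h

end Laplacian

section Approximation

variable {E F : Type*} [NormedAddCommGroup E] [InnerProductSpace ℝ E] [FiniteDimensional ℝ E]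
  [MeasurableSpace E] [BorelSpace E] [NormedAddCommGroup F]

lemma exists_smooth_dist_le_dist_fderiv_le {ψ : E → ℝ} (hψ : ContDiff ℝ 1 ψ)
    (hc : HasCompactSupport ψ) {ε : ℝ} (hε : 0 < ε) :
    ∃ φ : E → ℝ, ContDiff ℝ (⊤ : ℕ∞) φ ∧ tsupport φ ⊆ cthickening ε (tsupport ψ) ∧
      (∀ x, dist (φ x) (ψ x) ≤ ε) ∧ ∀ x, dist (fderiv ℝ φ x) (fderiv ℝ ψ x) ≤ ε := by
  have hψ' : Continuous (fderiv ℝ ψ) := hψ.continuous_fderiv one_ne_zero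
  obtain ⟨d₀, hd₀, hd₀ψ⟩ := Metric.uniformContinuous_iff.1
    (hc.uniformContinuous_of_continuous hψ.continuous) ε hε
  obtain ⟨d₁, hd₁, hd₁ψ⟩ := Metric.uniformContinuous_iff.1
    ((hc.fderiv ℝ).uniformContinuous_of_continuous hψ') ε hε
  obtain ⟨d, hd, hdm⟩ : ∃ d, 0 < d ∧ d ≤ min ε (min d₀ d₁) := ⟨_, by positivity, le_rfl⟩
  simp only [le_min_iff] at hdm
  let b : ContDiffBump (0 : E) := ⟨d / 2, d, half_pos hd, half_lt_self hd⟩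
  have hb : LocallyIntegrable (b.normed volume) := b.continuous_normed.locallyIntegrable
  refine ⟨b.normed volume ⋆[ContinuousLinearMap.lsmul ℝ ℝ, volume] ψ,
    b.hasCompactSupport_normed.contDiff_convolution_left _ b.contDiff_normed
      hψ.continuous.locallyIntegrable, ?_, fun x => ?_, fun x => ?_⟩
  · refine closure_minimal ((support_convolution_subset _).trans ?_) isClosed_cthickening
    rintro _ ⟨a, ha, z, hz, rfl⟩
    rw [b.support_normed_eq, mem_ball_zero_iff] at ha
    refine mem_cthickening_of_dist_le _ z ε _ (subset_tsupport _ hz) ?_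
    simpa [dist_eq_norm] using ha.le.trans hdm.1
  · exact b.dist_normed_convolution_le hψ.continuous.aestronglyMeasurable fun z hz =>
      (hd₀ψ (hz.trans_le hdm.2.1)).le
  · have hconv : (ContinuousLinearMap.lsmul ℝ ℝ : ℝ →L[ℝ] ℝ →L[ℝ] ℝ).precompR E =
        ContinuousLinearMap.lsmul ℝ ℝ := by
      ext; simp [ContinuousLinearMap.precompR_apply]
    rw [(hc.hasFDerivAt_convolution_right _ hb hψ x).fderiv, hconv]
    exact b.dist_normed_convolution_le hψ'.aestronglyMeasurable fun z hz =>
      (hd₁ψ (hz.trans_le hdm.2.2)).le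

lemma tendsto_integral_mul_norm_sq {a : E → ℝ} (ha : Continuous a) {φ : ℕ → E → F} {ψ : E → F}
    (hφ : ∀ n, Continuous (φ n)) (hψ : Continuous ψ) {K : Set E} (hK : IsCompact K)
    (hφK : ∀ n, ∀ x ∉ K, φ n x = 0) {ε : ℕ → ℝ} (hε : Filter.Tendsto ε Filter.atTop (nhds 0))
    (hφψ : ∀ n x, dist (φ n x) (ψ x) ≤ ε n) :
    Filter.Tendsto (fun n => ∫ x, a x * ‖φ n x‖ ^ 2) Filter.atTop
      (nhds (∫ x, a x * ‖ψ x‖ ^ 2)) := by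
  obtain ⟨B, hB⟩ := hε.bddAbove_range
  have hbound : ContinuousOn (fun x => ‖a x‖ * (‖ψ x‖ + B) ^ 2) K := by fun_prop
  refine tendsto_integral_of_dominated_convergence
    (K.indicator fun x => ‖a x‖ * (‖ψ x‖ + B) ^ 2)
    (fun n => (ha.mul ((hφ n).norm.pow 2)).aestronglyMeasurable)
    ((hbound.integrableOn_compact hK).integrable_indicator hK.measurableSet)
    (fun n => .of_forall fun x => ?_) (.of_forall fun x => ?_)
  · by_cases hx : x ∈ K
    · have hle : ‖φ n x‖ ≤ ‖ψ x‖ + B := calc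
        ‖φ n x‖ ≤ ‖ψ x‖ + ‖φ n x - ψ x‖ := norm_le_norm_add_norm_sub' _ _
        _ ≤ ‖ψ x‖ + B := by
          gcongr
          exact (dist_eq_norm (φ n x) (ψ x) ▸ hφψ n x).trans (hB (mem_range_self n))
      rw [indicator_of_mem hx, norm_mul, norm_pow, norm_norm]
      gcongr
    · simp [hφK n x hx, hx]
  · have hlim : Filter.Tendsto (fun n => φ n x) Filter.atTop (nhds (ψ x)) :=
      tendsto_iff_dist_tendsto_zero.2 (squeeze_zero (fun _ => dist_nonneg) (hφψ · x) hε)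
    exact (hlim.norm.pow 2).const_mul _

end Approximation

section TestFunctions

variable {N : ℕ}

lemma integral_mul_sq_le_of_forall_isTestFun {a ψ : 𝔼 N → ℝ} {Ω : Set (𝔼 N)} (ha : Continuous a)
    (hΩ : IsOpen Ω)
    (h : ∀ φ, IsTestFun Ω φ → ∫ x, a x * φ x ^ 2 ≤ ∫ x, ‖∇ φ x‖ ^ 2)
    (hψ : ContDiff ℝ 1 ψ) (hc : HasCompactSupport ψ) (hψΩ : tsupport ψ ⊆ Ω) :
    ∫ x, a x * ψ x ^ 2 ≤ ∫ x, ‖∇ ψ x‖ ^ 2 := by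
  obtain ⟨d, hd, hdΩ⟩ := hc.isCompact.exists_cthickening_subset_open hΩ hψΩ
  have hK : IsCompact (cthickening d (tsupport ψ)) := hc.isCompact.cthickening
  let ε (n : ℕ) : ℝ := d * (1 / ((n : ℝ) + 1))
  have hε0 (n : ℕ) : 0 < ε n := by positivity
  have hεd (n : ℕ) : ε n ≤ d :=
    mul_le_of_le_one_right hd.le ((div_le_one (by positivity)).2 (by simp))
  have hε : Filter.Tendsto ε Filter.atTop (nhds 0) := by
    simpa only [mul_zero] using tendsto_one_div_add_atTop_nhds_zero_nat.const_mul d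
  choose φ hφ hφs hφψ hφψ' using fun n => exists_smooth_dist_le_dist_fderiv_le hψ hc (hε0 n)
  have hφK (n : ℕ) : tsupport (φ n) ⊆ cthickening d (tsupport ψ) :=
    (hφs n).trans (cthickening_mono (hεd n) _)
  have hφ1 (n : ℕ) : ContDiff ℝ 1 (φ n) := (hφ n).of_le (by exact_mod_cast le_top)
  have hlim := tendsto_integral_mul_norm_sq ha (fun n => (hφ n).continuous) hψ.continuous hK
    (fun n x hx => image_eq_zero_of_notMem_tsupport fun hx' => hx (hφK n hx')) hε hφψ
  have hlim' := tendsto_integral_mul_norm_sq (continuous_const (y := (1 : ℝ)))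
    (fun n => continuous_gradient (hφ1 n)) (continuous_gradient hψ) hK
    (fun n x hx => gradient_eq_zero_of_notMem_tsupport fun hx' => hx (hφK n hx')) hε
    fun n x => by simpa only [gradient, LinearIsometryEquiv.dist_map] using hφψ' n x
  simp only [norm_eq_abs, sq_abs, one_mul] at hlim hlim'
  exact le_of_tendsto_of_tendsto' hlim hlim' fun n => h (φ n)
    ⟨hφ n, hK.of_isClosed_subset (isClosed_tsupport _) (hφK n), (hφK n).trans hdΩ⟩

end TestFunctions

section PositivePart

lemma hasDerivAt_max_zero_pow (n : ℕ) (t : ℝ) :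
    HasDerivAt (fun t : ℝ => max t 0 ^ (n + 2)) ((n + 2) * max t 0 ^ (n + 1)) t := by
  rcases lt_trichotomy t 0 with ht | rfl | ht
  · have h : (fun t : ℝ => max t 0 ^ (n + 2)) =ᶠ[nhds t] fun _ => 0 := by
      filter_upwards [gt_mem_nhds ht] with z hz
      simp [max_eq_right hz.le]
    simpa [max_eq_right ht.le] using (hasDerivAt_const t (0 : ℝ)).congr_of_eventuallyEq h
  · have h : (fun t : ℝ => max t 0 ^ (n + 2)) =O[nhds 0] fun t => ‖t - 0‖ ^ (n + 2) := by
      refine .of_norm_le fun t => ?_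
      rw [norm_pow, norm_of_nonneg (le_max_right t 0), norm_eq_abs, sub_zero]
      exact pow_le_pow_left₀ (le_max_right t 0) (max_le (le_abs_self t) (abs_nonneg t)) _
    simpa using (h.hasFDerivAt (by lia)).hasDerivAt
  · have h : (fun t : ℝ => max t 0 ^ (n + 2)) =ᶠ[nhds t] fun t => t ^ (n + 2) := by
      filter_upwards [lt_mem_nhds ht] with z hz
      rw [max_eq_left hz.le]
    simpa [max_eq_left ht.le] using (hasDerivAt_pow (n + 2) t).congr_of_eventuallyEq h

lemma contDiff_max_zero_pow (n : ℕ) : ContDiff ℝ n fun t : ℝ => max t 0 ^ (n + 1) := by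
  induction n with
  | zero => exact contDiff_zero.2 (by fun_prop)
  | succ n ih =>
    push_cast
    refine contDiff_succ_iff_deriv.2
      ⟨fun t => (hasDerivAt_max_zero_pow n t).differentiableAt, by simp, ?_⟩
    rw [funext fun t => (hasDerivAt_max_zero_pow n t).deriv]
    exact contDiff_const.mul ih

/-- A `C²` regularisation of the positive part: a positive convex function lying between `t` and
`max t 0 + ε`, and constant on `t ≤ 0`. -/
def smoothPosPart (ε t : ℝ) : ℝ := (max t 0 ^ 3 + ε ^ 3) ^ (1 / 3 : ℝ)

variable {ε : ℝ}

lemma smoothPosPart_pos (hε : 0 < ε) (t : ℝ) : 0 < smoothPosPart ε t := by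
  unfold smoothPosPart; positivity

lemma smoothPosPart_pow_three (hε : 0 < ε) (t : ℝ) :
    smoothPosPart ε t ^ 3 = max t 0 ^ 3 + ε ^ 3 := by
  rw [smoothPosPart, ← rpow_mul_natCast (by positivity)]
  norm_num

lemma contDiff_smoothPosPart (hε : 0 < ε) : ContDiff ℝ 2 (smoothPosPart ε) :=
  ((contDiff_max_zero_pow 2).add contDiff_const).rpow_const_of_ne fun t => by positivity

lemma max_le_smoothPosPart (hε : 0 < ε) (t : ℝ) : max t 0 ≤ smoothPosPart ε t := by
  refine le_of_pow_le_pow_left₀ three_ne_zero (smoothPosPart_pos hε t).le ?_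
  rw [smoothPosPart_pow_three hε]
  linarith [pow_pos hε 3]

lemma smoothPosPart_le (hε : 0 < ε) (t : ℝ) : smoothPosPart ε t ≤ max t 0 + ε := by
  have h : 0 ≤ max t 0 := le_max_right t 0
  refine le_of_pow_le_pow_left₀ three_ne_zero (by positivity) ?_
  rw [smoothPosPart_pow_three hε]
  exact pow_add_pow_le h hε.le three_ne_zero

lemma hasDerivAt_smoothPosPart (hε : 0 < ε) (t : ℝ) :
    HasDerivAt (smoothPosPart ε) ((max t 0 / smoothPosPart ε t) ^ 2) t := by
  have hG := smoothPosPart_pos hε t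
  have h := ((hasDerivAt_max_zero_pow 1 t).add_const (ε ^ 3)).rpow_const (p := 1 / 3)
    (Or.inl (by positivity : max t 0 ^ 3 + ε ^ 3 ≠ 0))
  have hpow : (max t 0 ^ 3 + ε ^ 3) ^ (1 / 3 - 1 : ℝ) = (smoothPosPart ε t ^ 2)⁻¹ := by
    rw [smoothPosPart, ← rpow_mul_natCast (by positivity), ← rpow_neg (by positivity)]
    norm_num
  refine h.congr_deriv ?_
  norm_num at hpow ⊢
  rw [hpow]
  field_simp

lemma hasDerivAt_deriv_smoothPosPart (hε : 0 < ε) (t : ℝ) :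
    HasDerivAt (fun t => (max t 0 / smoothPosPart ε t) ^ 2)
      (2 * max t 0 * ε ^ 3 / smoothPosPart ε t ^ 5) t := by
  have hG := smoothPosPart_pos hε t
  have h := (hasDerivAt_max_zero_pow 0 t).div ((hasDerivAt_smoothPosPart hε t).pow 2)
    (pow_pos hG 2).ne'
  simp only [div_pow]
  refine h.congr_deriv ?_
  have hcube : ε ^ 3 = smoothPosPart ε t ^ 3 - max t 0 ^ 3 := by
    rw [smoothPosPart_pow_three hε, add_sub_cancel_left]
  simp only [Pi.pow_apply]
  rw [hcube]
  field_simp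
  norm_num
  ring

lemma sq_mul_lap_le_lap_smoothPosPart {N : ℕ} {w : 𝔼 N → ℝ} (hε : 0 < ε) (hw : ContDiff ℝ 2 w)
    (x : 𝔼 N) :
    (max (w x) 0 / smoothPosPart ε (w x)) ^ 2 * lap w x
      ≤ lap (fun y => smoothPosPart ε (w y)) x := by
  rw [lap_comp (F' := fun t => (max t 0 / smoothPosPart ε t) ^ 2)
    (F'' := fun t => 2 * max t 0 * ε ^ 3 / smoothPosPart ε t ^ 5)
    (fun _ => hasDerivAt_smoothPosPart hε _) (fun _ => hasDerivAt_deriv_smoothPosPart hε _) hw]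
  have hpos := smoothPosPart_pos hε (w x)
  exact le_add_of_nonneg_left (by positivity)

end PositivePart

section MeanValue

lemma hasDerivAt_integral_comp_add_smul_mul {E : Type*} [NormedAddCommGroup E]
    [InnerProductSpace ℝ E] [FiniteDimensional ℝ E] [MeasurableSpace E] [BorelSpace E]
    {w ρ : E → ℝ} (hw : ContDiff ℝ 1 w) (hρ : Continuous ρ) (hc : HasCompactSupport ρ) (x : E)
    (t : ℝ) :
    HasDerivAt (fun t : ℝ => ∫ z, w (x + t • z) * ρ z) (∫ z, ⟪∇ w (x + t • z), z⟫ * ρ z) t := by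
  have hw' : Continuous (∇ w) := continuous_gradient hw
  have hwc := hw.continuous
  have hcont : Continuous fun q : ℝ × E => ⟪∇ w (x + q.1 • q.2), q.2⟫ * ρ q.2 := by fun_prop
  obtain ⟨B, hB⟩ := ((isCompact_closedBall t 1).prod
    hc.isCompact).exists_bound_of_continuousOn hcont.continuousOn
  refine (hasDerivAt_integral_of_dominated_loc_of_deriv_le
    (F := fun (t : ℝ) z => w (x + t • z) * ρ z)
    (F' := fun (t : ℝ) z => ⟪∇ w (x + t • z), z⟫ * ρ z)
    (bound := (tsupport ρ).indicator fun _ => B) (ball_mem_nhds t one_pos)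
    (.of_forall fun s => ?_) ?_ ?_ (.of_forall fun z s hs => ?_) ?_ (.of_forall fun z s _ => ?_)).2
  · exact Continuous.aestronglyMeasurable (by fun_prop)
  · exact Continuous.integrable_of_hasCompactSupport (by fun_prop) hc.mul_left
  · exact Continuous.aestronglyMeasurable (by fun_prop)
  · by_cases hz : z ∈ tsupport ρ
    · rw [indicator_of_mem hz]
      exact hB (s, z) ⟨ball_subset_closedBall hs, hz⟩
    · simp [hz, image_eq_zero_of_notMem_tsupport hz]
  · exact (integrableOn_const hc.isCompact.measure_lt_top.ne).integrable_indicator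
      (isClosed_tsupport ρ).measurableSet
  · have hline : HasDerivAt (fun s : ℝ => x + s • z) z s := by
      simpa using ((hasDerivAt_id s).smul_const z).const_add x
    rw [inner_gradient_left]
    exact ((hw.differentiable one_ne_zero _).hasFDerivAt.comp_hasDerivAt s hline).mul_const _

variable {N : ℕ}

/-- The radial weight whose averages replace averages over `ball 0 a` in the mean value
inequalities; being `C¹` and explicitly a gradient makes the divergence theorem on the whole space
available. -/
def radialWeight (a : ℝ) (z : 𝔼 N) : ℝ := max (a ^ 2 - ‖z‖ ^ 2) 0 ^ 2

/-- A potential of the radial vector field `-radialWeight a z • z`. -/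
def radialPotential (a : ℝ) (z : 𝔼 N) : ℝ := 6⁻¹ * max (a ^ 2 - ‖z‖ ^ 2) 0 ^ 3

variable {a b : ℝ} {x : 𝔼 N} {D : Set (𝔼 N)} {U V w : 𝔼 N → ℝ}

lemma radialWeight_nonneg (a : ℝ) (z : 𝔼 N) : 0 ≤ radialWeight a z := sq_nonneg _

lemma continuous_radialWeight (a : ℝ) : Continuous (radialWeight (N := N) a) := by
  unfold radialWeight; fun_prop

lemma radialWeight_le (a : ℝ) (z : 𝔼 N) : radialWeight a z ≤ a ^ 4 := calc
  radialWeight a z ≤ (a ^ 2) ^ 2 := by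
    refine pow_le_pow_left₀ (le_max_right _ _) (max_le ?_ (sq_nonneg a)) 2
    linarith [sq_nonneg ‖z‖]
  _ = a ^ 4 := by ring

lemma le_radialWeight {z : 𝔼 N} (hba : b ≤ a) (hz : z ∈ closedBall 0 b) :
    (a ^ 2 - b ^ 2) ^ 2 ≤ radialWeight a z := by
  rw [mem_closedBall_zero_iff] at hz
  have hb : 0 ≤ b := (norm_nonneg z).trans hz
  have hba' : 0 ≤ a ^ 2 - b ^ 2 := sub_nonneg.2 (pow_le_pow_left₀ hb hba 2)
  refine pow_le_pow_left₀ hba' ((sub_le_sub_left ?_ _).trans (le_max_left _ _)) 2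
  gcongr

lemma max_sub_norm_sq_eq_zero {z : 𝔼 N} (ha : 0 ≤ a) (hz : z ∉ ball 0 a) :
    max (a ^ 2 - ‖z‖ ^ 2) 0 = 0 := by
  rw [mem_ball_zero_iff, not_lt] at hz
  exact max_eq_right (sub_nonpos.2 (pow_le_pow_left₀ ha hz 2))

lemma radialWeight_eq_zero {z : 𝔼 N} (ha : 0 ≤ a) (hz : z ∉ ball 0 a) : radialWeight a z = 0 := by
  simp [radialWeight, max_sub_norm_sq_eq_zero ha hz]

lemma radialPotential_eq_zero {z : 𝔼 N} (ha : 0 ≤ a) (hz : z ∉ ball 0 a) :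
    radialPotential a z = 0 := by
  simp [radialPotential, max_sub_norm_sq_eq_zero ha hz]

lemma hasCompactSupport_radialWeight (ha : 0 ≤ a) : HasCompactSupport (radialWeight (N := N) a) :=
  .intro (isCompact_closedBall 0 a) fun _ hz =>
    radialWeight_eq_zero ha fun h => hz (ball_subset_closedBall h)

lemma hasCompactSupport_radialPotential (ha : 0 ≤ a) :
    HasCompactSupport (radialPotential (N := N) a) :=
  .intro (isCompact_closedBall 0 a) fun _ hz =>
    radialPotential_eq_zero ha fun h => hz (ball_subset_closedBall h)

lemma contDiff_radialPotential (a : ℝ) : ContDiff ℝ 1 (radialPotential (N := N) a) :=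
  contDiff_const.mul (((contDiff_max_zero_pow 2).of_le one_le_two).comp
    (contDiff_const.sub (contDiff_norm_sq ℝ)))

lemma gradient_radialPotential (a : ℝ) (z : 𝔼 N) :
    ∇ (radialPotential a) z = -radialWeight a z • z := by
  have hsq : HasGradientAt (fun z : 𝔼 N => a ^ 2 - ‖z‖ ^ 2) (-((2 : ℝ) • z)) z := by
    rw [hasGradientAt_iff_hasFDerivAt]
    refine ((hasStrictFDerivAt_norm_sq z).hasFDerivAt.const_sub (a ^ 2)).congr_fderiv ?_
    ext y
    simp
  have hF := (hasDerivAt_max_zero_pow 1 (a ^ 2 - ‖z‖ ^ 2)).const_mul (6⁻¹ : ℝ)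
  calc ∇ (radialPotential a) z = _ :=
        gradient_comp (f := fun z => a ^ 2 - ‖z‖ ^ 2) (F := fun t => 6⁻¹ * max t 0 ^ 3) hF
          hsq.differentiableAt
    _ = -radialWeight a z • z := by
        rw [hsq.gradient, smul_neg, smul_smul, neg_smul, radialWeight]
        norm_num
        ring_nf

lemma integral_radialWeight_pos (ha : 0 < a) : 0 < ∫ z : 𝔼 N, radialWeight a z :=
  (continuous_radialWeight a).integral_pos_of_hasCompactSupport_nonneg_nonzero
    (hasCompactSupport_radialWeight ha.le) (radialWeight_nonneg a) (x := 0)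
    (by simp [radialWeight, ha.ne', sq_nonneg])

lemma integral_norm_sq_mul_radialWeight_pos (hN : 1 ≤ N) (ha : 0 < a) :
    0 < ∫ z : 𝔼 N, ‖z‖ ^ 2 * radialWeight a z := by
  have hz : ‖EuclideanSpace.single (⟨0, hN⟩ : Fin N) (a / 2)‖ = a / 2 := by
    simp [abs_of_pos ha]
  have hpos : 0 < a ^ 2 - (a / 2) ^ 2 := by nlinarith
  refine Continuous.integral_pos_of_hasCompactSupport_nonneg_nonzero
    (by have := continuous_radialWeight (N := N) a; fun_prop)
    (hasCompactSupport_radialWeight ha.le).mul_left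
    (fun z => mul_nonneg (sq_nonneg _) (radialWeight_nonneg a z))
    (x := EuclideanSpace.single ⟨0, hN⟩ (a / 2)) ?_
  rw [radialWeight, hz, max_eq_left hpos.le]
  positivity

lemma integral_inner_gradient_mul_radialWeight_nonpos (ha : 0 ≤ a) (hw : ContDiff ℝ 2 w)
    (h : ∀ z ∈ ball x a, lap w z ≤ 0) {t : ℝ} (ht : t ∈ Ioo 0 1) :
    ∫ z, ⟪∇ w (x + t • z), z⟫ * radialWeight a z ≤ 0 := by
  have hw' : ContDiff ℝ 2 fun z => w (x + t • z) :=
    hw.comp (contDiff_const.add (contDiff_id.const_smul t))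
  have hgreen := integral_inner_gradient_eq_neg (contDiff_radialPotential a) hw'
    (.inl (hasCompactSupport_radialPotential ha))
  have hgrad : ∀ z, ⟪∇ (radialPotential a) z, ∇ (fun z => w (x + t • z)) z⟫
      = -t * (⟪∇ w (x + t • z), z⟫ * radialWeight a z) := fun z => by
    rw [gradient_radialPotential,
      gradient_comp_add_smul t x (hw.differentiable two_ne_zero _), inner_smul_left,
      inner_smul_right, real_inner_comm]
    simp only [conj_trivial]
    ring
  have hlap : 0 ≤ -∫ z, radialPotential a z * lap (fun z => w (x + t • z)) z := by
    refine neg_nonneg.2 (integral_nonpos fun z => ?_)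
    by_cases hz : z ∈ ball 0 a
    · rw [lap_comp_add_smul t x z hw]
      refine mul_nonpos_of_nonneg_of_nonpos (by unfold radialPotential; positivity)
        (mul_nonpos_of_nonneg_of_nonpos (sq_nonneg t) (h _ ?_))
      rw [mem_ball_zero_iff] at hz
      rw [mem_ball_iff_norm, add_sub_cancel_left, norm_smul, norm_of_nonneg ht.1.le]
      exact (mul_le_of_le_one_left (norm_nonneg z) ht.2.le).trans_lt hz
    · simp [radialPotential_eq_zero ha hz]
  rw [← hgreen, integral_congr_ae (.of_forall hgrad), integral_const_mul] at hlap
  exact nonpos_of_mul_nonneg_right hlap (neg_neg_of_pos ht.1)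

lemma integral_comp_add_mul_radialWeight_le (ha : 0 ≤ a) (hw : ContDiff ℝ 2 w)
    (h : ∀ z ∈ ball x a, lap w z ≤ 0) :
    ∫ z, w (x + z) * radialWeight a z ≤ w x * ∫ z : 𝔼 N, radialWeight a z := by
  have hderiv : ∀ t, HasDerivAt (fun t : ℝ => ∫ z, w (x + t • z) * radialWeight a z)
      (∫ z, ⟪∇ w (x + t • z), z⟫ * radialWeight a z) t :=
    hasDerivAt_integral_comp_add_smul_mul (hw.of_le one_le_two) (continuous_radialWeight a)
      (hasCompactSupport_radialWeight ha) x
  have hanti : AntitoneOn (fun t : ℝ => ∫ z, w (x + t • z) * radialWeight a z) (Icc 0 1) := by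
    refine antitoneOn_of_hasDerivWithinAt_nonpos (convex_Icc 0 1)
      (fun t _ => (hderiv t).continuousAt.continuousWithinAt)
      (fun t _ => (hderiv t).hasDerivWithinAt) fun t ht => ?_
    exact integral_inner_gradient_mul_radialWeight_nonpos ha hw h (interior_Icc.subset ht)
  have h01 := hanti (left_mem_Icc.2 zero_le_one) (right_mem_Icc.2 zero_le_one) zero_le_one
  simpa [integral_const_mul] using h01

lemma integral_comp_add_mul_radialWeight (f : 𝔼 N → ℝ) (x : 𝔼 N) (a : ℝ) :
    ∫ z, f (x + z) * radialWeight a z = ∫ z, f z * radialWeight a (z - x) := by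
  rw [← integral_add_left_eq_self (fun z => f z * radialWeight a (z - x)) x]
  simp only [add_sub_cancel_left]

lemma integrable_comp_add_mul_radialWeight {f : 𝔼 N → ℝ} (hf : Continuous f) (x : 𝔼 N)
    (ha : 0 ≤ a) : Integrable fun z => f (x + z) * radialWeight a z := by
  have hcont := (hf.comp (continuous_const_add x)).mul (continuous_radialWeight a)
  exact hcont.integrable_of_hasCompactSupport (hasCompactSupport_radialWeight ha).mul_left

lemma setIntegral_le_mul_integral_radialWeight (ha : 0 ≤ a) (hba : b ≤ a) (hU : ContDiff ℝ 2 U)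
    (hU0 : ∀ z, 0 ≤ U z) (h : ∀ z ∈ ball x a, lap U z ≤ 0) (hD : IsCompact D)
    (hDb : D ⊆ closedBall x b) :
    (a ^ 2 - b ^ 2) ^ 2 * ∫ z in D, U z ≤ U x * ∫ z : 𝔼 N, radialWeight a z := by
  have hint : Integrable fun z => U z * radialWeight a (z - x) := by
    simpa using (integrable_comp_add_mul_radialWeight hU.continuous x ha).comp_sub_right x
  calc (a ^ 2 - b ^ 2) ^ 2 * ∫ z in D, U z = ∫ z in D, U z * (a ^ 2 - b ^ 2) ^ 2 := by
        rw [integral_mul_const, mul_comm]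
    _ ≤ ∫ z in D, U z * radialWeight a (z - x) := by
        have hUD := hU.continuous.mul_const ((a ^ 2 - b ^ 2) ^ 2)
        refine setIntegral_mono_on (hUD.continuousOn.integrableOn_compact hD)
          hint.integrableOn hD.measurableSet fun z hz => ?_
        refine mul_le_mul_of_nonneg_left (le_radialWeight hba ?_) (hU0 z)
        simpa [dist_eq_norm] using hDb hz
    _ ≤ ∫ z, U z * radialWeight a (z - x) := setIntegral_le_integral hint
        (.of_forall fun z => mul_nonneg (hU0 z) (radialWeight_nonneg _ _))
    _ = ∫ z, U (x + z) * radialWeight a z := (integral_comp_add_mul_radialWeight U x a).symm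
    _ ≤ U x * ∫ z : 𝔼 N, radialWeight a z := integral_comp_add_mul_radialWeight_le ha hU h

lemma integral_comp_add_mul_radialWeight_one_le (hU : Continuous U) (hU0 : ∀ z, 0 ≤ U z)
    (hD : IsCompact D) (hxD : closedBall x 1 ⊆ D) :
    ∫ z, U (x + z) * radialWeight 1 z ≤ ∫ z in D, U z := by
  rw [integral_comp_add_mul_radialWeight, ← integral_indicator hD.measurableSet]
  have hint := integrable_comp_add_mul_radialWeight hU x zero_le_one
  refine integral_mono (by simpa using hint.comp_sub_right x)
    ((hU.continuousOn.integrableOn_compact hD).integrable_indicator hD.measurableSet) fun z => ?_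
  by_cases hz : z ∈ D
  · rw [indicator_of_mem hz]
    exact mul_le_of_le_one_right (hU0 z) ((radialWeight_le 1 _).trans_eq (one_pow 4))
  · have hz1 : z - x ∉ ball 0 1 := fun h =>
      hz (hxD (ball_subset_closedBall (by simpa [dist_eq_norm] using h)))
    simp [hz, radialWeight_eq_zero zero_le_one hz1]

lemma mul_integral_radialWeight_le_setIntegral (hw : ContDiff ℝ 2 w) (hU : Continuous U)
    (hU0 : ∀ z, 0 ≤ U z) (hwU : ∀ z, w z ≤ U z) (h : ∀ z ∈ ball x 1, 0 < w z → 0 ≤ lap w z)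
    (hD : IsCompact D) (hxD : closedBall x 1 ⊆ D) :
    w x * ∫ z : 𝔼 N, radialWeight 1 z ≤ ∫ z in D, U z := by
  set I := ∫ z : 𝔼 N, radialWeight 1 z
  have hI0 : 0 < I := integral_radialWeight_pos one_pos
  have hρ : Integrable (radialWeight (N := N) 1) := .of_integral_ne_zero hI0.ne'
  have hUρ := integrable_comp_add_mul_radialWeight hU x zero_le_one
  have happrox : ∀ ε > 0, w x * I ≤ (∫ z in D, U z) + ε * I := fun ε hε => by
    have hG : ContDiff ℝ 2 fun z => smoothPosPart ε (w z) := (contDiff_smoothPosPart hε).comp hw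
    have hlap : ∀ z ∈ ball x 1, lap (fun z => -1 * smoothPosPart ε (w z)) z ≤ 0 := fun z hz => by
      have hderiv : 0 ≤ (max (w z) 0 / smoothPosPart ε (w z)) ^ 2 * lap w z := by
        rcases le_or_gt (w z) 0 with h0 | h0
        · simp [max_eq_right h0]
        · exact mul_nonneg (sq_nonneg _) (h z hz h0)
      rw [lap_const_mul _ hG, neg_one_mul, neg_nonpos]
      exact hderiv.trans (sq_mul_lap_le_lap_smoothPosPart hε hw z)
    have hmean := integral_comp_add_mul_radialWeight_le zero_le_one (contDiff_const.mul hG) hlap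
    simp only [neg_mul, one_mul, integral_neg] at hmean
    calc w x * I ≤ smoothPosPart ε (w x) * I := by
          gcongr
          exact (le_max_left _ _).trans (max_le_smoothPosPart hε _)
      _ ≤ ∫ z, smoothPosPart ε (w (x + z)) * radialWeight 1 z := neg_le_neg_iff.1 hmean
      _ ≤ ∫ z, (U (x + z) * radialWeight 1 z + ε * radialWeight 1 z) := by
          refine integral_mono (integrable_comp_add_mul_radialWeight hG.continuous x zero_le_one)
            (hUρ.add (hρ.const_mul ε)) fun z => ?_
          rw [← add_mul]
          refine mul_le_mul_of_nonneg_right ((smoothPosPart_le hε _).trans ?_)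
            (radialWeight_nonneg _ _)
          gcongr
          exact max_le (hwU _) (hU0 _)
      _ ≤ (∫ z in D, U z) + ε * I := by
          rw [integral_add hUρ (hρ.const_mul ε), integral_const_mul]
          gcongr
          exact integral_comp_add_mul_radialWeight_one_le hU hU0 hD hxD
  refine le_of_forall_pos_le_add fun δ hδ => ?_
  simpa [div_mul_cancel₀ _ hI0.ne'] using happrox (δ / I) (by positivity)

lemma mul_integral_norm_sq_mul_radialWeight_le (hN : 1 ≤ N) {k : ℝ} (hV : ContDiff ℝ 2 V)
    (hV0 : ∀ z, 0 ≤ V z) (h : ∀ z ∈ ball x 1, k ≤ -lap V z) :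
    k * ∫ z : 𝔼 N, ‖z‖ ^ 2 * radialWeight 1 z
      ≤ 2 * N * (V x * ∫ z : 𝔼 N, radialWeight 1 z) := by
  have hN0 : (0 : ℝ) < 2 * N := by positivity
  have hsq : ContDiff ℝ 2 fun z : 𝔼 N => ‖z - x‖ ^ 2 :=
    (contDiff_id.sub contDiff_const).norm_sq ℝ
  have hρ := continuous_radialWeight (N := N) 1
  have hsuper : ∀ z ∈ ball x 1, lap (fun z => V z + k / (2 * N) * ‖z - x‖ ^ 2) z ≤ 0 :=
    fun z hz => by
      rw [lap_add hV (contDiff_const.mul hsq), lap_const_mul _ hsq, lap_norm_sub_sq,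
        div_mul_cancel₀ _ hN0.ne']
      linarith [h z hz]
  have hmean := integral_comp_add_mul_radialWeight_le zero_le_one
    (hV.add (contDiff_const.mul hsq)) hsuper
  simp only [sub_self, norm_zero, add_sub_cancel_left] at hmean
  rw [← div_le_iff₀' hN0, mul_div_right_comm, ← integral_const_mul]
  calc ∫ z : 𝔼 N, k / (2 * N) * (‖z‖ ^ 2 * radialWeight 1 z)
      ≤ ∫ z, (V (x + z) + k / (2 * N) * ‖z‖ ^ 2) * radialWeight 1 z := by
        have hc : HasCompactSupport (radialWeight (N := N) 1) :=
          hasCompactSupport_radialWeight zero_le_one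
        have hVc := hV.continuous
        refine integral_mono (Continuous.integrable_of_hasCompactSupport (by fun_prop)
          hc.mul_left.mul_left) (Continuous.integrable_of_hasCompactSupport (by fun_prop)
          hc.mul_left) fun z => ?_
        have := mul_nonneg (hV0 (x + z)) (radialWeight_nonneg 1 z)
        simp only []
        linarith
    _ ≤ V x * ∫ z : 𝔼 N, radialWeight 1 z := by simpa using hmean

end MeanValue

section LaneEmden

variable {N : ℕ} {A B D : Set (𝔼 N)} {lam gam p θ ℓ σ : ℝ} {U V : 𝔼 N → ℝ} {x : 𝔼 N}

/-- Positive `C²` functions on `ℝ^N` solving the Lane–Emden system `-ΔU = lam V^p`,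
`-ΔV = gam U^θ` on the set `A`: the system of the theorem for `U = u + 1`, `V = v + 1`, extended
from `A` to the whole space by cutoffs. -/
structure IsLaneEmden (A : Set (𝔼 N)) (lam gam p θ : ℝ) (U V : 𝔼 N → ℝ) : Prop where
  contDiff_fst : ContDiff ℝ 2 U
  contDiff_snd : ContDiff ℝ 2 V
  pos_fst : ∀ x, 0 < U x
  pos_snd : ∀ x, 0 < V x
  neg_lap_fst : ∀ x ∈ A, -lap U x = lam * V x ^ p
  neg_lap_snd : ∀ x ∈ A, -lap V x = gam * U x ^ θ

namespace IsLaneEmden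

lemma mono (h : IsLaneEmden A lam gam p θ U V) (hBA : B ⊆ A) : IsLaneEmden B lam gam p θ U V where
  __ := h
  neg_lap_fst x hx := h.neg_lap_fst x (hBA hx)
  neg_lap_snd x hx := h.neg_lap_snd x (hBA hx)

lemma comp_add_smul (h : IsLaneEmden A lam gam p θ U V) (y : 𝔼 N) (r : ℝ) :
    IsLaneEmden ((fun z => y + r • z) ⁻¹' A) (r ^ 2 * lam) (r ^ 2 * gam) p θ
      (fun z => U (y + r • z)) fun z => V (y + r • z) where
  contDiff_fst := h.contDiff_fst.comp (contDiff_const.add (contDiff_id.const_smul r))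
  contDiff_snd := h.contDiff_snd.comp (contDiff_const.add (contDiff_id.const_smul r))
  pos_fst _ := h.pos_fst _
  pos_snd _ := h.pos_snd _
  neg_lap_fst x hx := by
    rw [lap_comp_add_smul r y x h.contDiff_fst, mul_assoc, ← h.neg_lap_fst _ hx, mul_neg]
  neg_lap_snd x hx := by
    rw [lap_comp_add_smul r y x h.contDiff_snd, mul_assoc, ← h.neg_lap_snd _ hx, mul_neg]

lemma lap_fst_nonpos (h : IsLaneEmden A lam gam p θ U V) (hlam : 0 ≤ lam) (hx : x ∈ A) :
    lap U x ≤ 0 := by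
  have := mul_nonneg hlam (rpow_nonneg (h.pos_snd x).le p)
  linarith [h.neg_lap_fst x hx]

lemma lap_sub_rpow_nonneg (h : IsLaneEmden A lam gam p θ U V) (hgam : 0 ≤ gam) (hθ : 0 ≤ θ)
    (hℓ : 0 < ℓ) (hσ0 : 0 ≤ σ) (hσ1 : σ ≤ 1) (hσ : σ * (θ + 1) = p + 1)
    (hℓσ : ℓ ^ (θ + 1) * σ * gam = lam) (hx : x ∈ A) (hpos : 0 < U x + -ℓ * V x ^ σ) :
    0 ≤ lap (fun y => U y + -ℓ * V y ^ σ) x := by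
  have hV := h.pos_snd x
  have hVσ : ContDiff ℝ 2 fun y => V y ^ σ :=
    h.contDiff_snd.rpow_const_of_ne fun y => (h.pos_snd y).ne'
  have hpow : ℓ * σ * gam * V x ^ (σ - 1) * (ℓ * V x ^ σ) ^ θ = lam * V x ^ p := by
    have hp : p = σ - 1 + σ * θ := by linarith
    rw [mul_rpow hℓ.le (rpow_nonneg hV.le _), ← rpow_mul hV.le, ← hℓσ, rpow_add hℓ, rpow_one, hp,
      rpow_add hV]
    ring
  have hcompare : lam * V x ^ p ≤ ℓ * σ * V x ^ (σ - 1) * (gam * U x ^ θ) := by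
    have hle : (ℓ * V x ^ σ) ^ θ ≤ U x ^ θ := rpow_le_rpow (by positivity) (by linarith) hθ
    calc lam * V x ^ p = ℓ * σ * gam * V x ^ (σ - 1) * (ℓ * V x ^ σ) ^ θ := hpow.symm
      _ ≤ ℓ * σ * gam * V x ^ (σ - 1) * U x ^ θ := by gcongr
      _ = ℓ * σ * V x ^ (σ - 1) * (gam * U x ^ θ) := by ring
  have hconcave : 0 ≤ ℓ * (σ * (1 - σ) * V x ^ (σ - 2) * ‖∇ V x‖ ^ 2) := by
    have := sub_nonneg.2 hσ1
    positivity
  rw [lap_add h.contDiff_fst (contDiff_const.mul hVσ), lap_const_mul _ hVσ,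
    lap_rpow h.contDiff_snd h.pos_snd]
  rw [← h.neg_lap_fst x hx, ← h.neg_lap_snd x hx] at hcompare
  linarith

lemma sub_rpow_mul_integral_le (h : IsLaneEmden A lam gam p θ U V) (hgam : 0 ≤ gam) (hθ : 0 ≤ θ)
    (hℓ : 0 < ℓ) (hσ0 : 0 ≤ σ) (hσ1 : σ ≤ 1) (hσ : σ * (θ + 1) = p + 1)
    (hℓσ : ℓ ^ (θ + 1) * σ * gam = lam) (hxA : ball x 1 ⊆ A) (hD : IsCompact D)
    (hxD : closedBall x 1 ⊆ D) :
    (U x + -ℓ * V x ^ σ) * ∫ z : 𝔼 N, radialWeight 1 z ≤ ∫ z in D, U z := by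
  refine mul_integral_radialWeight_le_setIntegral (w := fun y => U y + -ℓ * V y ^ σ)
    (h.contDiff_fst.add (contDiff_const.mul
      (h.contDiff_snd.rpow_const_of_ne fun y => (h.pos_snd y).ne')))
    h.contDiff_fst.continuous (fun z => (h.pos_fst z).le) (fun z => ?_)
    (fun z hz => h.lap_sub_rpow_nonneg hgam hθ hℓ hσ0 hσ1 hσ hℓσ (hxA hz)) hD hxD
  have := mul_pos hℓ (rpow_pos_of_pos (h.pos_snd z) σ)
  linarith

lemma le_fst_mul_integral (h : IsLaneEmden (ball 0 16) lam gam p θ U V) (hlam : 0 ≤ lam)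
    (hx : x ∈ closedBall 0 3) :
    108 ^ 2 * ∫ z in closedBall 0 3, U z ≤ U x * ∫ z : 𝔼 N, radialWeight 12 z := by
  rw [mem_closedBall_zero_iff] at hx
  have hsub : closedBall (0 : 𝔼 N) 3 ⊆ closedBall x 6 :=
    closedBall_subset_closedBall' (by rw [dist_zero_left]; linarith)
  have hmean := setIntegral_le_mul_integral_radialWeight (a := 12) (by norm_num) (by norm_num)
    h.contDiff_fst (fun z => (h.pos_fst z).le) (fun z hz => h.lap_fst_nonpos hlam
      (ball_subset_ball' (by rw [dist_zero_right]; linarith) hz)) (isCompact_closedBall 0 3) hsub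
  norm_num at hmean ⊢
  exact hmean

lemma mul_rpow_mul_integral_le_snd (hN : 1 ≤ N) (h : IsLaneEmden (ball 0 16) lam gam p θ U V)
    (hlam : 0 ≤ lam) (hgam : 0 ≤ gam) (hθ : 0 ≤ θ) (hx : x ∈ closedBall 0 2) :
    gam * (108 ^ 2 * (∫ z in closedBall 0 3, U z) / ∫ z : 𝔼 N, radialWeight 12 z) ^ θ
        * ∫ z : 𝔼 N, ‖z‖ ^ 2 * radialWeight 1 z
      ≤ 2 * N * (V x * ∫ z : 𝔼 N, radialWeight 1 z) := by
  have hI : 0 < ∫ z : 𝔼 N, radialWeight 12 z := integral_radialWeight_pos (by norm_num)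
  have hx0 : dist x 0 ≤ 2 := hx
  refine mul_integral_norm_sq_mul_radialWeight_le hN h.contDiff_snd (fun z => (h.pos_snd z).le)
    fun z hz => ?_
  have hz3 : z ∈ closedBall 0 3 :=
    ball_subset_closedBall (ball_subset_ball' (by linarith) hz)
  rw [h.neg_lap_snd z (ball_subset_ball' (by linarith) hz)]
  gcongr
  · exact div_nonneg (mul_nonneg (by norm_num) (setIntegral_nonneg measurableSet_closedBall
      fun z _ => (h.pos_fst z).le)) hI.le
  · exact (div_le_iff₀ hI).2 (h.le_fst_mul_integral hlam hz3)

lemma setIntegral_fst_pos (h : IsLaneEmden A lam gam p θ U V) :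
    0 < ∫ z in closedBall 0 3, U z := by
  have hU := h.contDiff_fst.continuous
  refine (setIntegral_pos_iff_support_of_nonneg_ae (.of_forall fun z => (h.pos_fst z).le)
    (hU.continuousOn.integrableOn_compact (isCompact_closedBall _ _))).2 ?_
  rw [Function.support_eq_univ fun z => (h.pos_fst z).ne', univ_inter]
  exact measure_closedBall_pos _ _ (by norm_num)

end IsLaneEmden

lemma exists_pos_forall_le_add_rpow_and_mul_rpow_le_unit (hN : 1 ≤ N) (hθ : 0 ≤ θ) :
    ∃ c > 0, ∀ {p lam gam ℓ σ : ℝ} {U V : 𝔼 N → ℝ}, 0 ≤ lam → 0 ≤ gam → 0 < ℓ → 0 ≤ σ → σ ≤ 1 →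
      σ * (θ + 1) = p + 1 → ℓ ^ (θ + 1) * σ * gam = lam →
      IsLaneEmden (ball 0 16) lam gam p θ U V →
      ∃ J > 0, ∀ x ∈ closedBall 0 2, U x ≤ J + ℓ * V x ^ σ ∧ c * gam * J ^ θ ≤ V x := by
  set I₁ := ∫ z : 𝔼 N, radialWeight 1 z
  set I₁₂ := ∫ z : 𝔼 N, radialWeight 12 z
  set S := ∫ z : 𝔼 N, ‖z‖ ^ 2 * radialWeight 1 z
  have hI₁ : 0 < I₁ := integral_radialWeight_pos one_pos
  have hI₁₂ : 0 < I₁₂ := integral_radialWeight_pos (by norm_num)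
  have hS : 0 < S := integral_norm_sq_mul_radialWeight_pos hN one_pos
  refine ⟨(108 ^ 2 * I₁ / I₁₂) ^ θ * S / (2 * N * I₁), by positivity, ?_⟩
  intro p lam gam ℓ σ U V hlam hgam hℓ hσ0 hσ1 hσ hℓσ h
  have hJ := h.setIntegral_fst_pos
  refine ⟨(∫ z in closedBall 0 3, U z) / I₁, div_pos hJ hI₁, fun x hx => ⟨?_, ?_⟩⟩
  · have hx0 : dist x 0 ≤ 2 := hx
    have hmean := h.sub_rpow_mul_integral_le hgam hθ hℓ hσ0 hσ1 hσ hℓσ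
      (ball_subset_ball' (by linarith)) (isCompact_closedBall 0 3)
      (closedBall_subset_closedBall' (by linarith))
    linarith [(le_div_iff₀ hI₁).2 hmean]
  · have hV := h.mul_rpow_mul_integral_le_snd hN hlam hgam hθ hx
    set K := ∫ z in closedBall 0 3, U z
    have hpow : (108 ^ 2 * I₁ / I₁₂) ^ θ * (K / I₁) ^ θ = (108 ^ 2 * K / I₁₂) ^ θ := by
      rw [← mul_rpow (by positivity) (by positivity)]
      congr 1
      field_simp
    calc (108 ^ 2 * I₁ / I₁₂) ^ θ * S / (2 * N * I₁) * gam * (K / I₁) ^ θ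
        = gam * ((108 ^ 2 * I₁ / I₁₂) ^ θ * (K / I₁) ^ θ) * S / (2 * N * I₁) := by ring
      _ = gam * (108 ^ 2 * K / I₁₂) ^ θ * S / (2 * N * I₁) := by rw [hpow]
      _ ≤ V x := by
        rw [div_le_iff₀ (by positivity)]
        linarith

lemma exists_pos_forall_le_add_rpow_and_mul_rpow_le (hN : 1 ≤ N) (hθ : 0 ≤ θ) :
    ∃ c > 0, ∀ {p lam gam ℓ σ : ℝ} {U V : 𝔼 N → ℝ} {y : 𝔼 N} {r : ℝ},
      0 ≤ lam → 0 ≤ gam → 0 < ℓ → 0 ≤ σ → σ ≤ 1 → σ * (θ + 1) = p + 1 →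
      ℓ ^ (θ + 1) * σ * gam = lam → 0 < r → IsLaneEmden (ball y (16 * r)) lam gam p θ U V →
      ∃ J > 0, ∀ x ∈ closedBall y (2 * r),
        U x ≤ J + ℓ * V x ^ σ ∧ c * gam * r ^ 2 * J ^ θ ≤ V x := by
  obtain ⟨c, hc, hunit⟩ := exists_pos_forall_le_add_rpow_and_mul_rpow_le_unit (N := N) hN hθ
  refine ⟨c, hc, ?_⟩
  intro p lam gam ℓ σ U V y r hlam hgam hℓ hσ0 hσ1 hσ hℓσ hr h
  have hscaled : IsLaneEmden (ball 0 16) (r ^ 2 * lam) (r ^ 2 * gam) p θ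
      (fun z => U (y + r • z)) fun z => V (y + r • z) := by
    refine (h.comp_add_smul y r).mono fun z hz => ?_
    rw [mem_ball_zero_iff] at hz
    rw [mem_preimage, mem_ball_iff_norm, add_sub_cancel_left, norm_smul, norm_of_nonneg hr.le,
      mul_comm]
    gcongr
  obtain ⟨J, hJ, hbound⟩ := hunit (by positivity) (by positivity) hℓ hσ0 hσ1 hσ
    (by rw [← hℓσ]; ring) hscaled
  refine ⟨J, hJ, fun x hx => ?_⟩
  have hmem : r⁻¹ • (x - y) ∈ closedBall (0 : 𝔼 N) 2 := by
    rw [mem_closedBall_iff_norm] at hx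
    rw [mem_closedBall_zero_iff, norm_smul, norm_inv, norm_of_nonneg hr.le, inv_mul_le_iff₀ hr]
    linarith
  have hx := hbound _ hmem
  simp only [smul_inv_smul₀ hr.ne', add_sub_cancel] at hx
  exact ⟨hx.1, by linarith [hx.2]⟩

end LaneEmden

section Energy

variable {N : ℕ} {W η : 𝔼 N → ℝ} {q : ℝ}

lemma gradient_rpow (hW : Differentiable ℝ W) (hpos : ∀ x, 0 < W x) (a : ℝ) (x : 𝔼 N) :
    ∇ (fun y => W y ^ a) x = (a * W x ^ (a - 1)) • ∇ W x :=
  gradient_comp (Real.hasDerivAt_rpow_const (Or.inl (hpos x).ne')) (hW x)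

lemma gradient_sq (hη : Differentiable ℝ η) (x : 𝔼 N) :
    ∇ (fun y => η y ^ 2) x = (2 * η x) • ∇ η x := by
  simp only [sq, gradient_mul (hη x) (hη x), two_mul, add_smul]

lemma norm_gradient_rpow_mul_sq (hW : Differentiable ℝ W) (hpos : ∀ x, 0 < W x)
    (hη : Differentiable ℝ η) (hq : 1 < q) (x : 𝔼 N) :
    ‖∇ (fun y => W y ^ (q / 2) * η y) x‖ ^ 2 =
      q ^ 2 / (4 * (q - 1)) * ⟪∇ (fun y => W y ^ (q - 1) * η y ^ 2) x, ∇ W x⟫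
        + (q - 2) / (4 * (q - 1)) * ⟪∇ (fun y => W y ^ q) x, ∇ (fun y => η y ^ 2) x⟫
        + W x ^ q * ‖∇ η x‖ ^ 2 := by
  have hWr (a : ℝ) : DifferentiableAt ℝ (fun y => W y ^ a) x :=
    (hW x).rpow_const (Or.inl (hpos x).ne')
  have hq1 : q - 1 ≠ 0 := by linarith
  have hpow : W x ^ q = W x ^ (q - 2) * W x ^ 2 := by
    rw [← rpow_add_natCast (hpos x).ne']; norm_num
  have hpow' : W x ^ (q - 1) = W x ^ (q - 2) * W x := by
    rw [← rpow_add_one (hpos x).ne']; ring_nf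
  have hhalf : W x ^ (q / 2) = W x ^ (q / 2 - 1) * W x := by
    rw [← rpow_add_one (hpos x).ne']; ring_nf
  have hhalf_sq : W x ^ (q - 2) = (W x ^ (q / 2 - 1)) ^ 2 := by
    rw [← rpow_mul_natCast (hpos x).le]; ring_nf
  rw [gradient_mul (hWr _) (hη x), gradient_mul (hWr _) ((hη x).fun_pow 2), gradient_sq hη]
  simp only [gradient_rpow hW hpos, ← real_inner_self_eq_norm_sq, inner_add_left, inner_add_right,
    real_inner_smul_left, real_inner_smul_right, real_inner_comm (∇ η x) (∇ W x)]
  rw [sub_sub, one_add_one_eq_two, hpow', hpow, hhalf, hhalf_sq]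
  field_simp
  ring

-- Green's formula moves both gradient products of `norm_gradient_rpow_mul_sq` onto `W` and `η`.
lemma integral_norm_gradient_rpow_mul_sq (hW : ContDiff ℝ 2 W) (hpos : ∀ x, 0 < W x)
    (hη : ContDiff ℝ 2 η) (hc : HasCompactSupport η) (hq : 1 < q) :
    ∫ x, ‖∇ (fun y => W y ^ (q / 2) * η y) x‖ ^ 2 =
      q ^ 2 / (4 * (q - 1)) * (∫ x, W x ^ (q - 1) * -lap W x * η x ^ 2)
        + ∫ x, W x ^ q *
          (‖∇ η x‖ ^ 2 - (q - 2) / (4 * (q - 1)) * lap (fun y => η y ^ 2) x) := by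
  have hWr (a : ℝ) : ContDiff ℝ 2 fun x => W x ^ a := hW.rpow_const_of_ne fun x => (hpos x).ne'
  have hη2 : ContDiff ℝ 2 fun x => η x ^ 2 := hη.pow 2
  have hWη : ContDiff ℝ 2 fun x => W x ^ (q - 1) * η x ^ 2 := (hWr _).mul hη2
  have hη2s : tsupport (fun x => η x ^ 2) ⊆ tsupport η :=
    tsupport_comp_subset (g := fun t : ℝ => t ^ 2) (by simp) η
  have hWηs : tsupport (fun x => W x ^ (q - 1) * η x ^ 2) ⊆ tsupport η :=
    (tsupport_mul_subset_right (f := fun x => W x ^ (q - 1))).trans hη2s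
  have hη2c : HasCompactSupport fun x => η x ^ 2 := hc.mono' (subset_closure.trans hη2s)
  have hWηc : HasCompactSupport fun x => W x ^ (q - 1) * η x ^ 2 := hη2c.mul_left
  have hint {f : 𝔼 N → ℝ} (hf : Continuous f) (h : ∀ x, x ∉ tsupport η → f x = 0) :
      Integrable f := hf.integrable_of_hasCompactSupport (HasCompactSupport.intro hc h)
  have hgrad {f : 𝔼 N → ℝ} (hf : ContDiff ℝ 2 f) : Continuous (∇ f) :=
    continuous_gradient (hf.of_le one_le_two)
  have hi₁ : Integrable fun x => ⟪∇ (fun y => W y ^ (q - 1) * η y ^ 2) x, ∇ W x⟫ :=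
    hint ((hgrad hWη).inner (hgrad hW)) fun x hx => by
      rw [gradient_eq_zero_of_notMem_tsupport fun h => hx (hWηs h), inner_zero_left]
  have hi₂ : Integrable fun x => ⟪∇ (fun y => W y ^ q) x, ∇ (fun y => η y ^ 2) x⟫ :=
    hint ((hgrad (hWr q)).inner (hgrad hη2)) fun x hx => by
      rw [gradient_eq_zero_of_notMem_tsupport fun h => hx (hη2s h), inner_zero_right]
  have hi₃ : Integrable fun x => W x ^ q * ‖∇ η x‖ ^ 2 :=
    hint ((hWr q).continuous.mul ((hgrad hη).norm.pow 2)) fun x hx => by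
      simp [gradient_eq_zero_of_notMem_tsupport hx]
  have hi₄ : Integrable fun x => W x ^ q * lap (fun y => η y ^ 2) x :=
    hint ((hWr q).continuous.mul (continuous_lap hη2)) fun x hx => by
      simp [lap_eq_zero_of_notMem_tsupport fun h => hx (hη2s h)]
  have hgreen₁ := integral_inner_gradient_eq_neg (hWη.of_le one_le_two) hW (Or.inl hWηc)
  have hgreen₂ := integral_inner_gradient_eq_neg ((hWr q).of_le one_le_two) hη2 (Or.inr hη2c)
  simp only [norm_gradient_rpow_mul_sq (hW.differentiable two_ne_zero) hpos
    (hη.differentiable two_ne_zero) hq]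
  set a := q ^ 2 / (4 * (q - 1))
  set b := (q - 2) / (4 * (q - 1))
  simp only [mul_sub, mul_left_comm _ b]
  rw [integral_add ((hi₁.const_mul a).fun_add (hi₂.const_mul b)) hi₃,
    integral_add (hi₁.const_mul a) (hi₂.const_mul b), integral_sub hi₃ (hi₄.const_mul b)]
  simp only [integral_const_mul, hgreen₁, hgreen₂, mul_neg, neg_mul, integral_neg,
    mul_right_comm (W _ ^ (q - 1))]
  ring

end Energy

section Cutoff

variable {N : ℕ}

/-- A `C²` cutoff function for the pair of concentric balls of radii `r` and `2 * r` around `y`;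
`K` is the scale-invariant bound for the derivatives that enter the energy identity. -/
structure IsCutoff (η : 𝔼 N → ℝ) (y : 𝔼 N) (r K : ℝ) : Prop where
  contDiff : ContDiff ℝ 2 η
  tsupport_subset : tsupport η ⊆ closedBall y (2 * r)
  eq_one : ∀ x ∈ ball y r, η x = 1
  sq_le_one : ∀ x, η x ^ 2 ≤ 1
  norm_gradient_sq_le : ∀ x, ‖∇ η x‖ ^ 2 ≤ K / r ^ 2
  abs_lap_sq_le : ∀ x, |lap (fun z => η z ^ 2) x| ≤ K / r ^ 2

lemma IsCutoff.hasCompactSupport {η : 𝔼 N → ℝ} {y : 𝔼 N} {r K : ℝ} (h : IsCutoff η y r K) :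
    HasCompactSupport η :=
  (isCompact_closedBall y (2 * r)).of_isClosed_subset (isClosed_tsupport η) h.tsupport_subset

lemma exists_isCutoff_unit (N : ℕ) : ∃ (K : ℝ) (f : 𝔼 N → ℝ), IsCutoff f 0 1 K := by
  let f : ContDiffBump (0 : 𝔼 N) := ⟨1, 2, one_pos, one_lt_two⟩
  have hf : ContDiff ℝ 2 f := f.contDiff
  have hgradc : HasCompactSupport (∇ f) :=
    HasCompactSupport.intro f.hasCompactSupport fun _ => gradient_eq_zero_of_notMem_tsupport
  have hsq : HasCompactSupport fun x => f x ^ 2 :=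
    f.hasCompactSupport.comp_left (g := fun t : ℝ => t ^ 2) (by simp)
  have hlapc : HasCompactSupport (lap fun x => f x ^ 2) :=
    HasCompactSupport.intro hsq fun _ => lap_eq_zero_of_notMem_tsupport
  obtain ⟨K₁, hK₁⟩ := hgradc.exists_bound_of_continuous (continuous_gradient (hf.of_le one_le_two))
  obtain ⟨K₂, hK₂⟩ := hlapc.exists_bound_of_continuous (continuous_lap (hf.pow 2))
  have hK₂0 : 0 ≤ K₂ := (norm_nonneg _).trans (hK₂ 0)
  refine ⟨K₁ ^ 2 + K₂, f, hf, ?_, fun x hx => f.one_of_mem_closedBall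
    (ball_subset_closedBall hx), fun x => pow_le_one₀ f.nonneg f.le_one, fun x => ?_,
    fun x => ?_⟩
  · rw [f.tsupport_eq, mul_one]
  · have := pow_le_pow_left₀ (norm_nonneg _) (hK₁ x) 2
    linarith
  · have := hK₂ x
    rw [norm_eq_abs] at this
    linarith [sq_nonneg K₁]

lemma IsCutoff.comp_smul_sub {f : 𝔼 N → ℝ} {K : ℝ} (h : IsCutoff f 0 1 K) (y : 𝔼 N) {r : ℝ}
    (hr : 0 < r) : IsCutoff (fun x => f (-(r⁻¹ • y) + r⁻¹ • x)) y r K := by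
  have hnorm (x : 𝔼 N) : ‖-(r⁻¹ • y) + r⁻¹ • x‖ = dist x y / r := by
    rw [neg_add_eq_sub, ← smul_sub, norm_smul, norm_inv, norm_of_nonneg hr.le, dist_eq_norm,
      inv_mul_eq_div]
  refine ⟨h.contDiff.comp (contDiff_const.add (contDiff_id.const_smul _)), ?_, fun x hx => ?_,
    fun x => h.sq_le_one _, fun x => ?_, fun x => ?_⟩
  · refine closure_minimal (fun x hx => ?_) isClosed_closedBall
    have := h.tsupport_subset (subset_tsupport f hx)
    rwa [mem_closedBall_zero_iff, hnorm, mul_one, div_le_iff₀ hr] at this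
  · refine h.eq_one _ ?_
    rwa [mem_ball_zero_iff, hnorm, div_lt_one hr]
  · rw [gradient_comp_add_smul _ _ (h.contDiff.differentiable two_ne_zero _), norm_smul, mul_pow,
      norm_inv, norm_of_nonneg hr.le, inv_pow, inv_mul_eq_div]
    have := h.norm_gradient_sq_le (-(r⁻¹ • y) + r⁻¹ • x)
    rw [one_pow, div_one] at this
    gcongr
  · rw [lap_comp_add_smul (f := fun z => f z ^ 2) r⁻¹ _ _ (h.contDiff.pow 2), abs_mul,
      abs_of_nonneg (by positivity), inv_pow, inv_mul_eq_div]
    have := h.abs_lap_sq_le (-(r⁻¹ • y) + r⁻¹ • x)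
    rw [one_pow, div_one] at this
    gcongr

lemma exists_forall_isCutoff (N : ℕ) :
    ∃ K : ℝ, ∀ (y : 𝔼 N) (r : ℝ), 0 < r → ∃ η, IsCutoff η y r K := by
  obtain ⟨K, f, hf⟩ := exists_isCutoff_unit N
  exact ⟨K, fun y r hr => ⟨_, hf.comp_smul_sub y hr⟩⟩

end Cutoff

section Truncation

variable {N : ℕ}

lemma exists_truncation {U f : 𝔼 N → ℝ} {J : ℝ} {B : Set (𝔼 N)} (hU : ContDiff ℝ 2 U)
    (hUpos : ∀ x, 0 < U x) (hf : Continuous f) (hfpos : ∀ x, 0 < f x) (hJ : 0 < J)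
    (hB : IsCompact B) (hUf : ∀ x ∈ B, U x ≤ J + f x) :
    ∃ W : 𝔼 N → ℝ, ContDiff ℝ 2 W ∧ (∀ x, 0 < W x) ∧
      (∀ x ∈ B, U x ≤ W x + J ∧ W x ≤ U x ∧ W x ≤ 2 * f x) ∧
      ∀ x, lap U x ≤ 0 → lap U x ≤ lap W x := by
  obtain ⟨κ₁, hκ₁, hκ₁U⟩ := hB.exists_forall_le' hU.continuous.continuousOn fun x _ => hUpos x
  obtain ⟨κ₂, hκ₂, hκ₂f⟩ := hB.exists_forall_le' hf.continuousOn fun x _ => hfpos x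
  obtain ⟨κ, hκ, hκle⟩ : ∃ κ > 0, κ ≤ min J (min κ₁ κ₂) :=
    ⟨_, lt_min hJ (lt_min hκ₁ hκ₂), le_rfl⟩
  obtain ⟨hκJ, hκκ₁, hκκ₂⟩ : κ ≤ J ∧ κ ≤ κ₁ ∧ κ ≤ κ₂ := by simpa only [le_min_iff] using hκle
  have hw : ContDiff ℝ 2 fun x => U x - J := hU.sub contDiff_const
  refine ⟨fun x => smoothPosPart κ (U x - J), (contDiff_smoothPosPart hκ).comp hw,
    fun x => smoothPosPart_pos hκ _, fun x hx => ?_, fun x hlap => ?_⟩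
  · have hlower := max_le_smoothPosPart hκ (U x - J)
    have hupper := smoothPosPart_le hκ (U x - J)
    have hU := hκ₁U x hx
    have hf := hκ₂f x hx
    refine ⟨?_, hupper.trans ?_, hupper.trans ?_⟩
    · linarith [le_max_left (U x - J) 0]
    · rw [← le_sub_iff_add_le]
      exact max_le (by linarith) (by linarith)
    · rw [← le_sub_iff_add_le]
      exact max_le (by linarith [hUf x hx]) (by linarith)
  · have hratio : (max (U x - J) 0 / smoothPosPart κ (U x - J)) ^ 2 ≤ 1 :=
      pow_le_one₀ (div_nonneg (le_max_right _ _) (smoothPosPart_pos hκ _).le)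
        (div_le_one_of_le₀ (max_le_smoothPosPart hκ _) (smoothPosPart_pos hκ _).le)
    have hlapw : lap (fun y => U y - J) x = lap U x := by
      simp only [sub_eq_add_neg]
      rw [lap_add hU contDiff_const]
      simp [lap]
    have := sq_mul_lap_le_lap_smoothPosPart hκ hw x
    rw [hlapw] at this
    nlinarith

end Truncation

section Stability

variable {N : ℕ} {A : Set (𝔼 N)} {lam gam p θ q r s K M μ : ℝ} {U V Z ω g η : 𝔼 N → ℝ} {y : 𝔼 N}

/-- The weight multiplying `φ²` in the stability inequality, without its constant factor. It is also
evaluated at pairs `(W, V)` with `W ≤ U` that do not solve the system. -/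
def stabilityWeight (p θ : ℝ) (U V : 𝔼 N → ℝ) (x : 𝔼 N) : ℝ :=
  V x ^ ((p - 1) / 2) * U x ^ ((θ - 1) / 2)

lemma continuous_stabilityWeight (p θ : ℝ) (hU : Continuous U) (hUpos : ∀ x, 0 < U x)
    (hV : Continuous V) (hVpos : ∀ x, 0 < V x) : Continuous (stabilityWeight p θ U V) :=
  (hV.rpow_const fun x => Or.inl (hVpos x).ne').mul
    (hU.rpow_const fun x => Or.inl (hUpos x).ne')

/-- Solutions of the Lane–Emden system that are stable with respect to test functions supported
in `A`. -/
structure IsStableLaneEmden (A : Set (𝔼 N)) (lam gam p θ : ℝ) (U V : 𝔼 N → ℝ) : Prop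
    extends IsLaneEmden A lam gam p θ U V where
  stable : ∀ φ, IsTestFun A φ →
    √(lam * gam * p * θ) * ∫ x, stabilityWeight p θ U V x * φ x ^ 2
      ≤ ∫ x, ‖∇ φ x‖ ^ 2

lemma IsStableLaneEmden.mono {B : Set (𝔼 N)} (h : IsStableLaneEmden A lam gam p θ U V)
    (hBA : B ⊆ A) : IsStableLaneEmden B lam gam p θ U V where
  toIsLaneEmden := h.toIsLaneEmden.mono hBA
  stable φ hφ := h.stable φ ⟨hφ.1, hφ.2.1, hφ.2.2.trans hBA⟩

lemma IsStableLaneEmden.sqrt_mul_integral_le (h : IsStableLaneEmden A lam gam p θ U V)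
    (hA : IsOpen A) (hη : ContDiff ℝ 1 η) (hc : HasCompactSupport η) (hηA : tsupport η ⊆ A) :
    √(lam * gam * p * θ) * ∫ x, stabilityWeight p θ U V x * η x ^ 2
      ≤ ∫ x, ‖∇ η x‖ ^ 2 := by
  have hω := continuous_stabilityWeight p θ h.contDiff_fst.continuous h.pos_fst
    h.contDiff_snd.continuous h.pos_snd
  have := integral_mul_sq_le_of_forall_isTestFun (hω.const_mul √(lam * gam * p * θ)) hA
    (fun φ hφ => by simpa only [mul_assoc, integral_const_mul] using h.stable φ hφ) hη hc hηA
  simpa only [mul_assoc, integral_const_mul] using this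

namespace IsCutoff

lemma integrable_mul_sq (h : IsCutoff η y r K) (hg : Continuous g) :
    Integrable fun x => g x * η x ^ 2 :=
  (hg.mul (h.contDiff.continuous.pow 2)).integrable_of_hasCompactSupport <|
    HasCompactSupport.intro h.hasCompactSupport fun x hx => by
      simp [image_eq_zero_of_notMem_tsupport hx]

lemma setIntegral_ball_le_integral (h : IsCutoff η y r K) (hg : Continuous g) (hg0 : ∀ x, 0 ≤ g x) :
    ∫ x in ball y r, g x ≤ ∫ x, g x * η x ^ 2 := by
  calc ∫ x in ball y r, g x = ∫ x in ball y r, g x * η x ^ 2 :=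
        setIntegral_congr_fun measurableSet_ball fun x hx => by
          simp only [h.eq_one x hx, one_pow, mul_one]
    _ ≤ ∫ x, g x * η x ^ 2 :=
        setIntegral_le_integral (h.integrable_mul_sq hg)
          (.of_forall fun x => mul_nonneg (hg0 x) (sq_nonneg _))

lemma integral_le_mul_setIntegral (h : IsCutoff η y r K) {f : 𝔼 N → ℝ} {D : ℝ}
    (hf : Continuous f) (hg : Continuous g) (hzero : ∀ x, x ∉ tsupport η → f x = 0)
    (hle : ∀ x ∈ closedBall y (2 * r), f x ≤ D * g x) :
    ∫ x, f x ≤ D * ∫ x in closedBall y (2 * r), g x := by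
  have hcompact := isCompact_closedBall y (2 * r)
  rw [← setIntegral_eq_integral_of_forall_compl_eq_zero (s := closedBall y (2 * r))
    fun x hx => hzero x fun hη => hx (h.tsupport_subset hη), ← integral_const_mul]
  exact setIntegral_mono_on (hf.continuousOn.integrableOn_compact hcompact)
    ((hg.const_mul D).continuousOn.integrableOn_compact hcompact) measurableSet_closedBall hle

lemma integral_mul_sq_mono (h : IsCutoff η y r K) {f : 𝔼 N → ℝ} (hf : Continuous f)
    (hg : Continuous g) (hle : ∀ x ∈ closedBall y (2 * r), f x ≤ g x) :
    ∫ x, f x * η x ^ 2 ≤ ∫ x, g x * η x ^ 2 := by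
  refine integral_mono (h.integrable_mul_sq hf) (h.integrable_mul_sq hg) fun x => ?_
  by_cases hx : x ∈ tsupport η
  · exact mul_le_mul_of_nonneg_right (hle x (h.tsupport_subset hx)) (sq_nonneg _)
  · simp [image_eq_zero_of_notMem_tsupport hx]

lemma integral_norm_gradient_rpow_mul_sq_le (h : IsCutoff η y r K) (hZ : ContDiff ℝ 2 Z)
    (hpos : ∀ x, 0 < Z x) (hg : Continuous g) (hZg : ∀ x ∈ closedBall y (2 * r), -lap Z x ≤ g x)
    (hq : 1 < q) :
    ∫ x, ‖∇ (fun z => Z z ^ (q / 2) * η z) x‖ ^ 2 ≤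
      q ^ 2 / (4 * (q - 1)) * (∫ x, Z x ^ (q - 1) * g x * η x ^ 2)
        + (1 + |(q - 2) / (4 * (q - 1))|) * (K / r ^ 2) * ∫ x in closedBall y (2 * r), Z x ^ q := by
  have hZr (a : ℝ) : Continuous fun x => Z x ^ a :=
    hZ.continuous.rpow_const fun x => Or.inl (hpos x).ne'
  have hη2 : ContDiff ℝ 2 fun x => η x ^ 2 := h.contDiff.pow 2
  have hη2s : tsupport (fun x => η x ^ 2) ⊆ tsupport η :=
    tsupport_comp_subset (g := fun t : ℝ => t ^ 2) (by simp) η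
  rw [integral_norm_gradient_rpow_mul_sq hZ hpos h.contDiff h.hasCompactSupport hq]
  refine add_le_add (mul_le_mul_of_nonneg_left ?_ (by
    have := sub_pos.2 hq
    positivity)) ?_
  · refine h.integral_mul_sq_mono ((hZr _).mul (continuous_lap hZ).neg) ((hZr _).mul hg)
      fun x hx => ?_
    exact mul_le_mul_of_nonneg_left (hZg x hx) (rpow_nonneg (hpos x).le _)
  · refine h.integral_le_mul_setIntegral ((hZr q).mul (((continuous_gradient
      (h.contDiff.of_le one_le_two)).norm.pow 2).sub ((continuous_lap hη2).const_mul _)))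
      (hZr q) (fun x hx => ?_) fun x _ => ?_
    · simp [gradient_eq_zero_of_notMem_tsupport hx,
        lap_eq_zero_of_notMem_tsupport fun hx' => hx (hη2s hx')]
    · rw [mul_comm (Z x ^ q)]
      refine mul_le_mul_of_nonneg_right ?_ (rpow_nonneg (hpos x).le q)
      have hlap := (neg_le_abs _).trans
        ((abs_mul ((q - 2) / (4 * (q - 1))) (lap (fun z => η z ^ 2) x)).trans_le
          (mul_le_mul_of_nonneg_left (h.abs_lap_sq_le x) (abs_nonneg _)))
      linarith [h.norm_gradient_sq_le x]

end IsCutoff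

lemma IsStableLaneEmden.sqrt_mul_integral_rpow_le (h : IsStableLaneEmden A lam gam p θ U V)
    (hA : IsOpen A) (hη : IsCutoff η y r K) (hrA : closedBall y (2 * r) ⊆ A)
    (hZ : ContDiff ℝ 2 Z) (hpos : ∀ x, 0 < Z x) (hg : Continuous g)
    (hZg : ∀ x ∈ closedBall y (2 * r), -lap Z x ≤ g x) (hq : 1 < q) (hω : Continuous ω)
    (hωUV : ∀ x ∈ closedBall y (2 * r), ω x ≤ stabilityWeight p θ U V x) :
    √(lam * gam * p * θ) * ∫ x, ω x * Z x ^ q * η x ^ 2 ≤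
      q ^ 2 / (4 * (q - 1)) * (∫ x, Z x ^ (q - 1) * g x * η x ^ 2)
        + (1 + |(q - 2) / (4 * (q - 1))|) * (K / r ^ 2) * ∫ x in closedBall y (2 * r), Z x ^ q := by
  have hZr (a : ℝ) : ContDiff ℝ 2 fun x => Z x ^ a := hZ.rpow_const_of_ne fun x => (hpos x).ne'
  have hUV := continuous_stabilityWeight p θ h.contDiff_fst.continuous h.pos_fst
    h.contDiff_snd.continuous h.pos_snd
  have hψs : tsupport (fun x => Z x ^ (q / 2) * η x) ⊆ tsupport η :=
    tsupport_mul_subset_right (f := fun x => Z x ^ (q / 2))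
  have hstable := h.sqrt_mul_integral_le hA (((hZr (q / 2)).mul hη.contDiff).of_le one_le_two)
    hη.hasCompactSupport.mul_left (hψs.trans (hη.tsupport_subset.trans hrA))
  refine le_trans ?_ (hstable.trans (hη.integral_norm_gradient_rpow_mul_sq_le hZ hpos hg hZg hq))
  have hsq (x : 𝔼 N) : (Z x ^ (q / 2) * η x) ^ 2 = Z x ^ q * η x ^ 2 := by
    rw [mul_pow, ← rpow_mul_natCast (hpos x).le]
    norm_num
  simp only [hsq, ← mul_assoc]
  refine mul_le_mul_of_nonneg_left ?_ (sqrt_nonneg _)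
  refine hη.integral_mul_sq_mono (hω.mul (hZr q).continuous) (hUV.mul (hZr q).continuous)
    fun x hx => ?_
  exact mul_le_mul_of_nonneg_right (hωUV x hx) (rpow_nonneg (hpos x).le q)

lemma IsStableLaneEmden.integral_mul_rpow_le_add (h : IsStableLaneEmden A lam gam p θ U V)
    (hA : IsOpen A) (hη : IsCutoff η y r K) (hrA : closedBall y (2 * r) ⊆ A)
    (hS : 0 < lam * gam * p * θ) (hZ : ContDiff ℝ 2 Z) (hpos : ∀ x, 0 < Z x) (hg : Continuous g)
    (hZg : ∀ x ∈ closedBall y (2 * r), -lap Z x ≤ μ * g x) (hq : 1 < q) (hω : Continuous ω)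
    (hωUV : ∀ x ∈ closedBall y (2 * r), ω x ≤ stabilityWeight p θ U V x)
    (hZV : ∀ x ∈ closedBall y (2 * r), Z x ^ q ≤ M * V x ^ s) :
    ∫ x, ω x * Z x ^ q * η x ^ 2 ≤
      q ^ 2 / (4 * (q - 1)) * (μ / √(lam * gam * p * θ)) * (∫ x, Z x ^ (q - 1) * g x * η x ^ 2)
        + (1 + |(q - 2) / (4 * (q - 1))|) * K * M / √(lam * gam * p * θ)
          * ((∫ x in closedBall y (2 * r), V x ^ s) / r ^ 2) := by
  have hS := sqrt_pos.2 hS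
  have hZq : Continuous fun x => Z x ^ q := hZ.continuous.rpow_const fun x => Or.inl (hpos x).ne'
  have hVs : Continuous fun x => V x ^ s :=
    h.contDiff_snd.continuous.rpow_const fun x => Or.inl (h.pos_snd x).ne'
  have hcompact := isCompact_closedBall y (2 * r)
  have hmono : ∫ x in closedBall y (2 * r), Z x ^ q ≤
      M * ∫ x in closedBall y (2 * r), V x ^ s := by
    rw [← integral_const_mul]
    exact setIntegral_mono_on (hZq.continuousOn.integrableOn_compact hcompact)
      ((hVs.const_mul M).continuousOn.integrableOn_compact hcompact) measurableSet_closedBall hZV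
  have hK : 0 ≤ K / r ^ 2 := (sq_nonneg _).trans (hη.norm_gradient_sq_le y)
  have henergy := h.sqrt_mul_integral_rpow_le hA hη hrA hZ hpos (hg.const_mul μ) hZg hq hω hωUV
  simp only [mul_left_comm _ μ, mul_assoc μ, integral_const_mul] at henergy
  rw [← le_div_iff₀' hS] at henergy
  refine henergy.trans ?_
  rw [div_le_iff₀' hS]
  calc _ ≤ μ * (q ^ 2 / (4 * (q - 1)) * ∫ x, Z x ^ (q - 1) * g x * η x ^ 2)
        + (1 + |(q - 2) / (4 * (q - 1))|) * (K / r ^ 2)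
          * (M * ∫ x in closedBall y (2 * r), V x ^ s) := by gcongr
    _ = _ := by field_simp

end Stability

section RealInequalities

variable {p θ s q δ lam gam : ℝ}

lemma Lpoly_mul_sq (p s : ℝ) (hθ : θ + 1 ≠ 0) :
    Lpoly p θ s * (θ + 1) ^ 2 = s ^ 4 * (θ + 1) ^ 2
      - 16 * p * θ * (p + 1) * (s - 1) * (s * (θ + 1) - (p + 1)) := by
  unfold Lpoly
  field_simp
  ring

lemma one_lt_of_Lpoly_neg (hp : 0 < p) (hθ : 1 ≤ θ) (hs : (p + 1) / 2 < s)
    (hL : Lpoly p θ s < 0) : 1 < s := by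
  have hfac := Lpoly_mul_sq p s (by linarith : θ + 1 ≠ 0)
  have hneg : Lpoly p θ s * (θ + 1) ^ 2 < 0 := mul_neg_of_neg_of_pos hL (by positivity)
  have hlast : 0 < s * (θ + 1) - (p + 1) := by nlinarith
  by_contra! hs1
  have : 0 ≤ 16 * p * θ * (p + 1) * (1 - s) * (s * (θ + 1) - (p + 1)) := by
    have := sub_nonneg.2 hs1
    positivity
  nlinarith [mul_nonneg (pow_nonneg (by linarith : 0 ≤ s) 4) (sq_nonneg (θ + 1))]

-- The left-hand side is `q² s² / (16 (q - 1) (s - 1) p θ)`, and clearing denominators in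
-- `q = s (θ + 1) / (p + 1)` turns the inequality into `L(s) < 0`.
lemma mul_lt_one_of_Lpoly_neg (hp : 0 < p) (hθ : 0 < θ) (hlam : 0 < lam) (hgam : 0 < gam)
    (hs : 1 < s) (hq : 1 < q) (hqs : q * (p + 1) = s * (θ + 1)) (hL : Lpoly p θ s < 0) :
    q ^ 2 / (4 * (q - 1)) * (lam / √(lam * gam * p * θ))
      * (s ^ 2 / (4 * (s - 1)) * (gam / √(lam * gam * p * θ))) < 1 := by
  have hs1 := sub_pos.2 hs
  have hq1 := sub_pos.2 hq
  have hS : √(lam * gam * p * θ) * √(lam * gam * p * θ) = lam * gam * p * θ :=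
    mul_self_sqrt (by positivity)
  have hpoly : q ^ 2 * s ^ 2 < 16 * (q - 1) * (s - 1) * (p * θ) := by
    have hfac := Lpoly_mul_sq p s (by linarith : θ + 1 ≠ 0)
    have hneg : Lpoly p θ s * (θ + 1) ^ 2 < 0 := mul_neg_of_neg_of_pos hL (by positivity)
    rw [← hqs, show s ^ 4 * (θ + 1) ^ 2 = s ^ 2 * (s * (θ + 1)) ^ 2 by ring, ← hqs] at hfac
    refine lt_of_mul_lt_mul_right ?_ (sq_nonneg (p + 1))
    linarith
  calc _ = q ^ 2 * s ^ 2 * (lam * gam)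
        / (16 * (q - 1) * (s - 1) * (√(lam * gam * p * θ) * √(lam * gam * p * θ))) := by
        field_simp
        norm_num
    _ = q ^ 2 * s ^ 2 / (16 * (q - 1) * (s - 1) * (p * θ)) := by
        rw [hS]
        field_simp
    _ < 1 := (div_lt_one (by positivity)).2 hpoly

lemma rpow_mul_rpow_add_rpow_mul_rpow_le_add {X Z : ℝ} (hX : 0 ≤ X) (hZ : 0 ≤ Z) (hδ0 : 0 ≤ δ)
    (hδ1 : δ ≤ 1) : X ^ (1 - δ) * Z ^ δ + X ^ δ * Z ^ (1 - δ) ≤ X + Z := by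
  have h₁ := geom_mean_le_arith_mean2_weighted (sub_nonneg.2 hδ1) hδ0 hX hZ (by ring)
  have h₂ := geom_mean_le_arith_mean2_weighted hδ0 (sub_nonneg.2 hδ1) hX hZ (by ring)
  linarith

-- Rescaling `Z = κ Y` in the previous inequality multiplies its two terms by `κ ^ δ = k` and by
-- `κ ^ (1 - δ) = κ / k`; both beat the prescribed coefficients if `c₁ < k < 1 / c₂`.
lemma exists_mul_rpow_add_le_add_mul {c₁ c₂ : ℝ} (hc₁ : 0 < c₁) (hc₂ : 0 < c₂)
    (hc : c₁ * c₂ < 1) (hδ0 : 0 < δ) (hδ1 : δ ≤ 1) :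
    ∃ κ > 0, ∃ c₀ > 0, ∀ {X Y : ℝ}, 0 ≤ X → 0 ≤ Y →
      c₁ * (X ^ (1 - δ) * Y ^ δ) + (κ * c₂ + c₀) * (X ^ δ * Y ^ (1 - δ)) ≤ X + κ * Y := by
  obtain ⟨k, hc₁k, hkc₂⟩ : ∃ k, c₁ < k ∧ k < 1 / c₂ := exists_between ((lt_div_iff₀ hc₂).2 hc)
  have hk : 0 < k := hc₁.trans hc₁k
  set κ := k ^ (1 / δ)
  have hκ : 0 < κ := rpow_pos_of_pos hk _
  have hκδ : κ ^ δ = k := by rw [← rpow_mul hk.le, one_div_mul_cancel hδ0.ne', rpow_one]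
  have hκδ' : κ ^ (1 - δ) = κ / k := by rw [rpow_sub hκ, rpow_one, hκδ]
  have hc₀ : 0 < κ / k - κ * c₂ := by
    rw [sub_pos, lt_div_iff₀ hk, mul_assoc]
    exact mul_lt_of_lt_one_right hκ ((lt_div_iff₀' hc₂).1 hkc₂)
  refine ⟨κ, hκ, _, hc₀, fun {X Y} hX hY => ?_⟩
  have hyoung := rpow_mul_rpow_add_rpow_mul_rpow_le_add hX (mul_nonneg hκ.le hY) hδ0.le hδ1
  rw [mul_rpow hκ.le hY, mul_rpow hκ.le hY, hκδ, hκδ'] at hyoung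
  have hc₁X : c₁ * (X ^ (1 - δ) * Y ^ δ) ≤ k * (X ^ (1 - δ) * Y ^ δ) := by gcongr
  linarith

lemma exists_exponents (hp : 0 < p) (hpθ : p ≤ θ) (hlam : 0 < lam) (hgam : 0 < gam)
    (hs : (p + 1) / 2 < s) (hs1 : 1 < s) :
    ∃ q δ σ ℓ : ℝ, 1 < q ∧ 0 < δ ∧ δ ≤ 1 ∧ q * (p + 1) = s * (θ + 1) ∧ 2 * q * δ = θ + 1 ∧
      2 * s * δ = p + 1 ∧ 0 < σ ∧ σ ≤ 1 ∧ σ * (θ + 1) = p + 1 ∧ σ * q = s ∧ 0 < ℓ ∧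
      ℓ ^ (θ + 1) * σ * gam = lam := by
  have hθ : 0 < θ := hp.trans_le hpθ
  refine ⟨s * (θ + 1) / (p + 1), (p + 1) / (2 * s), (p + 1) / (θ + 1),
    (lam * (θ + 1) / ((p + 1) * gam)) ^ (1 / (θ + 1)), ?_, by positivity, ?_, by field_simp,
    by field_simp, by field_simp, by positivity, (div_le_one (by positivity)).2 (by linarith),
    by field_simp, by field_simp, by positivity, ?_⟩
  · rw [one_lt_div (by positivity)]
    nlinarith
  · rw [div_le_one (by positivity)]
    linarith
  · rw [← rpow_mul (by positivity), one_div_mul_cancel (by positivity), rpow_one]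
    field_simp

lemma mul_rpow_one_sub_mul_mul_rpow {W V : ℝ} (hW : 0 < W) (hV : 0 < V) (hq : 2 * q * δ = θ + 1)
    (hs : 2 * s * δ = p + 1) :
    (W ^ ((θ - 1) / 2) * V ^ ((p - 1) / 2) * W ^ q) ^ (1 - δ)
      * (W ^ ((θ - 1) / 2) * V ^ ((p - 1) / 2) * V ^ s) ^ δ = W ^ (q - 1) * V ^ p := by
  obtain ⟨a, rfl⟩ : ∃ a, W = exp a := ⟨log W, (exp_log hW).symm⟩
  obtain ⟨c, rfl⟩ : ∃ c, V = exp c := ⟨log V, (exp_log hV).symm⟩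
  simp only [← exp_mul, ← exp_add]
  congr 1
  linear_combination (-a / 2) * hq + (c / 2) * hs

lemma exists_rpow_le_mul_rpow_add_mul_rpow {b : ℝ} (hb : 1 < b) (hθ : 0 < θ) :
    ∃ K ≥ 0, ∀ {U W J : ℝ}, 0 ≤ U → 0 ≤ W → 0 ≤ J → U ≤ W + J →
      U ^ θ ≤ b * W ^ θ + K * J ^ θ := by
  obtain ⟨ε, hε, hεb⟩ : ∃ ε > 0, (1 + ε) ^ θ = b := by
    refine ⟨b ^ (1 / θ) - 1, sub_pos.2 (one_lt_rpow hb (by positivity)), ?_⟩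
    rw [add_sub_cancel, ← rpow_mul (by linarith), one_div_mul_cancel hθ.ne', rpow_one]
  refine ⟨(1 / ε + 1) ^ θ, by positivity, fun {U W J} hU hW hJ hUWJ => ?_⟩
  rcases le_total J (ε * W) with hJW | hJW
  · calc U ^ θ ≤ ((1 + ε) * W) ^ θ := rpow_le_rpow hU (by linarith) hθ.le
      _ = b * W ^ θ := by rw [mul_rpow (by positivity) hW, hεb]
      _ ≤ b * W ^ θ + (1 / ε + 1) ^ θ * J ^ θ := le_add_of_nonneg_right (by positivity)
  · have hWJ : W ≤ 1 / ε * J := by rwa [one_div_mul_eq_div, le_div_iff₀' hε]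
    calc U ^ θ ≤ ((1 / ε + 1) * J) ^ θ := rpow_le_rpow hU (by linarith) hθ.le
      _ = (1 / ε + 1) ^ θ * J ^ θ := mul_rpow (by positivity) hJ
      _ ≤ b * W ^ θ + (1 / ε + 1) ^ θ * J ^ θ := le_add_of_nonneg_left (by positivity)

lemma exists_absorption_constants {c₁ c₂ : ℝ} (hc₁ : 0 < c₁) (hc₂ : 0 < c₂) (hc : c₁ * c₂ < 1)
    (hδ0 : 0 < δ) (hδ1 : δ ≤ 1) (hθ : 0 < θ) :
    ∃ b κ c₀ B : ℝ, 0 < b ∧ 0 < κ ∧ 0 < c₀ ∧ 0 ≤ B ∧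
      (∀ {X Y : ℝ}, 0 ≤ X → 0 ≤ Y →
        c₁ * (X ^ (1 - δ) * Y ^ δ) + (κ * (c₂ * b) + c₀) * (X ^ δ * Y ^ (1 - δ)) ≤ X + κ * Y) ∧
      ∀ {U W J : ℝ}, 0 ≤ U → 0 ≤ W → 0 ≤ J → U ≤ W + J → U ^ θ ≤ b * W ^ θ + B * J ^ θ := by
  obtain ⟨b, hb, hcb⟩ : ∃ b, 1 < b ∧ b < 1 / (c₁ * c₂) :=
    exists_between ((one_lt_div (mul_pos hc₁ hc₂)).2 hc)
  have hb0 : 0 < b := one_pos.trans hb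
  rw [lt_div_iff₀' (mul_pos hc₁ hc₂), mul_assoc] at hcb
  obtain ⟨κ, hκ, c₀, hc₀, hyoung⟩ :=
    exists_mul_rpow_add_le_add_mul hc₁ (mul_pos hc₂ hb0) hcb hδ0 hδ1
  obtain ⟨B, hB, hsplit⟩ := exists_rpow_le_mul_rpow_add_mul_rpow hb hθ
  exact ⟨b, κ, c₀, B, hb0, hκ, hc₀, hB, hyoung, hsplit⟩

lemma le_mul_of_mul_add_le {A B X Y Q τ c₁ c₂ c₀ b κ D₁ D₂ D₃ : ℝ} (hb : 0 ≤ b) (hκ : 0 ≤ κ)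
    (hc₂ : 0 ≤ c₂) (hc₀ : 0 < c₀) (hAB : c₁ * A + (κ * (c₂ * b) + c₀) * B ≤ X + κ * Y)
    (hX : X ≤ c₁ * A + D₁ * τ) (hY : Y ≤ c₂ * Q + D₂ * τ) (hQ : Q ≤ b * B + D₃ * τ) :
    Q ≤ (b * ((D₁ + κ * (c₂ * D₃ + D₂)) / c₀) + D₃) * τ := by
  have hκY : κ * Y ≤ κ * (c₂ * (b * B + D₃ * τ) + D₂ * τ) := by
    refine mul_le_mul_of_nonneg_left (hY.trans ?_) hκ
    gcongr
  have hB : B ≤ (D₁ + κ * (c₂ * D₃ + D₂)) / c₀ * τ := by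
    rw [div_mul_eq_mul_div, le_div_iff₀' hc₀]
    linarith
  linarith [mul_le_mul_of_nonneg_left hB hb]

end RealInequalities

section LocalEstimate

variable {N : ℕ} {A : Set (𝔼 N)} {lam gam p θ q r s δ σ ℓ J K : ℝ} {U V W η : 𝔼 N → ℝ} {y : 𝔼 N}

lemma IsCutoff.integral_add_mul_sq (h : IsCutoff η y r K) {f g : 𝔼 N → ℝ} (hf : Continuous f)
    (hg : Continuous g) (a b : ℝ) :
    ∫ x, (a * f x + b * g x) * η x ^ 2
      = a * (∫ x, f x * η x ^ 2) + b * ∫ x, g x * η x ^ 2 := by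
  simp only [add_mul, mul_assoc]
  rw [integral_add ((h.integrable_mul_sq hf).const_mul a) ((h.integrable_mul_sq hg).const_mul b),
    integral_const_mul, integral_const_mul]

lemma IsCutoff.mul_integral_add_mul_integral_le (h : IsCutoff η y r K) {c₁ c₃ κ : ℝ}
    (hW : Continuous W) (hWpos : ∀ x, 0 < W x) (hV : Continuous V) (hVpos : ∀ x, 0 < V x)
    (hq : 2 * q * δ = θ + 1) (hs : 2 * s * δ = p + 1)
    (hyoung : ∀ {X Y : ℝ}, 0 ≤ X → 0 ≤ Y →
      c₁ * (X ^ (1 - δ) * Y ^ δ) + c₃ * (X ^ δ * Y ^ (1 - δ)) ≤ X + κ * Y) :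
    c₁ * (∫ x, W x ^ (q - 1) * V x ^ p * η x ^ 2)
        + c₃ * (∫ x, V x ^ (s - 1) * W x ^ θ * η x ^ 2)
      ≤ (∫ x, stabilityWeight p θ W V x * W x ^ q * η x ^ 2)
        + κ * ∫ x, stabilityWeight p θ W V x * V x ^ s * η x ^ 2 := by
  have hWr (a : ℝ) : Continuous fun x => W x ^ a := hW.rpow_const fun x => Or.inl (hWpos x).ne'
  have hVr (a : ℝ) : Continuous fun x => V x ^ a := hV.rpow_const fun x => Or.inl (hVpos x).ne'
  have hω := continuous_stabilityWeight p θ hW hWpos hV hVpos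
  have hpoint (x : 𝔼 N) : c₁ * (W x ^ (q - 1) * V x ^ p) + c₃ * (V x ^ (s - 1) * W x ^ θ)
      ≤ 1 * (stabilityWeight p θ W V x * W x ^ q)
        + κ * (stabilityWeight p θ W V x * V x ^ s) := by
    have hWx := hWpos x
    have hVx := hVpos x
    have := hyoung (X := stabilityWeight p θ W V x * W x ^ q)
      (Y := stabilityWeight p θ W V x * V x ^ s) (by unfold stabilityWeight; positivity)
      (by unfold stabilityWeight; positivity)
    rwa [mul_comm ((_ * W x ^ q) ^ δ), stabilityWeight, mul_rpow_one_sub_mul_mul_rpow hVx hWx hs hq,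
      mul_comm (V x ^ ((p - 1) / 2)), mul_rpow_one_sub_mul_mul_rpow hWx hVx hq hs,
      mul_comm (W x ^ ((θ - 1) / 2)), ← stabilityWeight, ← one_mul (_ * W x ^ q)] at this
  rw [← one_mul (∫ x, stabilityWeight p θ W V x * W x ^ q * η x ^ 2),
    ← h.integral_add_mul_sq (by fun_prop) (by fun_prop),
    ← h.integral_add_mul_sq (by fun_prop) (by fun_prop)]
  exact h.integral_mul_sq_mono (by fun_prop) (by fun_prop) fun x _ => hpoint x

lemma IsCutoff.integral_mul_rpow_le_mul_integral_add (h : IsCutoff η y r K) {b D : ℝ}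
    (hU : Continuous U) (hUpos : ∀ x, 0 < U x) (hW : Continuous W) (hWpos : ∀ x, 0 < W x)
    (hV : Continuous V) (hVpos : ∀ x, 0 < V x) (hD : 0 ≤ D)
    (hUW : ∀ x ∈ closedBall y (2 * r), U x ^ θ ≤ b * W x ^ θ + D * (V x / r ^ 2)) :
    ∫ x, V x ^ (s - 1) * U x ^ θ * η x ^ 2
      ≤ b * (∫ x, V x ^ (s - 1) * W x ^ θ * η x ^ 2)
        + D * ((∫ x in closedBall y (2 * r), V x ^ s) / r ^ 2) := by
  have hUr (a : ℝ) : Continuous fun x => U x ^ a := hU.rpow_const fun x => Or.inl (hUpos x).ne'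
  have hWr (a : ℝ) : Continuous fun x => W x ^ a := hW.rpow_const fun x => Or.inl (hWpos x).ne'
  have hVr (a : ℝ) : Continuous fun x => V x ^ a := hV.rpow_const fun x => Or.inl (hVpos x).ne'
  have hpoint : ∀ x ∈ closedBall y (2 * r), V x ^ (s - 1) * U x ^ θ
      ≤ b * (V x ^ (s - 1) * W x ^ θ) + D / r ^ 2 * V x ^ s := fun x hx => by
    have hVs : V x ^ s = V x ^ (s - 1) * V x := by
      rw [rpow_sub_one (hVpos x).ne', div_mul_cancel₀ _ (hVpos x).ne']
    calc V x ^ (s - 1) * U x ^ θ ≤ V x ^ (s - 1) * (b * W x ^ θ + D * (V x / r ^ 2)) :=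
          mul_le_mul_of_nonneg_left (hUW x hx) (rpow_nonneg (hVpos x).le (s - 1))
      _ = _ := by
          rw [hVs]
          ring
  have htail : ∫ x, V x ^ s * η x ^ 2 ≤ 1 * ∫ x in closedBall y (2 * r), V x ^ s :=
    h.integral_le_mul_setIntegral ((hVr s).mul (h.contDiff.continuous.pow 2)) (hVr s)
      (fun x hx => by simp [image_eq_zero_of_notMem_tsupport hx]) fun x _ =>
        (mul_comm (V x ^ s) _).trans_le
          (mul_le_mul_of_nonneg_right (h.sq_le_one x) (rpow_nonneg (hVpos x).le s))
  rw [one_mul] at htail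
  calc ∫ x, V x ^ (s - 1) * U x ^ θ * η x ^ 2
      ≤ ∫ x, (b * (V x ^ (s - 1) * W x ^ θ) + D / r ^ 2 * V x ^ s) * η x ^ 2 :=
        h.integral_mul_sq_mono (by fun_prop) (by fun_prop) hpoint
    _ = b * (∫ x, V x ^ (s - 1) * W x ^ θ * η x ^ 2) + D / r ^ 2 * ∫ x, V x ^ s * η x ^ 2 :=
        h.integral_add_mul_sq (by fun_prop) (hVr s) b (D / r ^ 2)
    _ ≤ b * (∫ x, V x ^ (s - 1) * W x ^ θ * η x ^ 2)
        + D / r ^ 2 * ∫ x in closedBall y (2 * r), V x ^ s := by gcongr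
    _ = _ := by ring

lemma exists_forall_exists_truncation_integral_le (K : ℝ) (hlam : 0 < lam) (hgam : 0 < gam)
    (hp : 0 < p) (hθ : 1 ≤ θ) (hq : 1 < q) (hs : 1 < s) (hℓ : 0 < ℓ) (hσq : σ * q = s) :
    ∃ D₁ D₂ : ℝ, ∀ {A : Set (𝔼 N)} {U V η : 𝔼 N → ℝ} {y : 𝔼 N} {r J : ℝ}, IsOpen A →
      IsStableLaneEmden A lam gam p θ U V → IsCutoff η y r K → closedBall y (2 * r) ⊆ A → 0 < J →
      (∀ x ∈ closedBall y (2 * r), U x ≤ J + ℓ * V x ^ σ) →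
      ∃ W : 𝔼 N → ℝ, Continuous W ∧ (∀ x, 0 < W x) ∧
        (∀ x ∈ closedBall y (2 * r), U x ≤ W x + J) ∧
        (∫ x, stabilityWeight p θ W V x * W x ^ q * η x ^ 2) ≤
          q ^ 2 / (4 * (q - 1)) * (lam / √(lam * gam * p * θ))
              * (∫ x, W x ^ (q - 1) * V x ^ p * η x ^ 2)
            + D₁ * ((∫ x in closedBall y (2 * r), V x ^ s) / r ^ 2) ∧
        (∫ x, stabilityWeight p θ W V x * V x ^ s * η x ^ 2) ≤
          s ^ 2 / (4 * (s - 1)) * (gam / √(lam * gam * p * θ))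
              * (∫ x, V x ^ (s - 1) * U x ^ θ * η x ^ 2)
            + D₂ * ((∫ x in closedBall y (2 * r), V x ^ s) / r ^ 2) := by
  refine ⟨(1 + |(q - 2) / (4 * (q - 1))|) * K * (2 * ℓ) ^ q / √(lam * gam * p * θ),
    (1 + |(s - 2) / (4 * (s - 1))|) * K * 1 / √(lam * gam * p * θ),
    fun {A U V η y r J} hA h hη hrA hJ hUJ => ?_⟩
  have hU := h.contDiff_fst.continuous
  have hV := h.contDiff_snd.continuous
  have hVr (a : ℝ) : Continuous fun x => V x ^ a := hV.rpow_const fun x => Or.inl (h.pos_snd x).ne'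
  obtain ⟨W, hW, hWpos, hWball, hlapW⟩ := exists_truncation h.contDiff_fst h.pos_fst
    ((hVr σ).const_mul ℓ) (fun x => mul_pos hℓ (rpow_pos_of_pos (h.pos_snd x) σ)) hJ
    (isCompact_closedBall y (2 * r)) hUJ
  have hS : 0 < lam * gam * p * θ := by positivity
  have hω := continuous_stabilityWeight p θ hW.continuous hWpos hV h.pos_snd
  have hωUV : ∀ x ∈ closedBall y (2 * r), stabilityWeight p θ W V x ≤ stabilityWeight p θ U V x :=
    fun x hx => mul_le_mul_of_nonneg_left
      (rpow_le_rpow (hWpos x).le (hWball x hx).2.1 (by linarith)) (rpow_nonneg (h.pos_snd x).le _)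
  refine ⟨W, hW.continuous, hWpos, fun x hx => (hWball x hx).1, ?_, ?_⟩
  · refine h.integral_mul_rpow_le_add hA hη hrA hS hW hWpos (hVr p) (fun x hx => ?_) hq hω hωUV
      fun x hx => ?_
    · rw [← h.neg_lap_fst x (hrA hx)]
      exact neg_le_neg (hlapW x (h.lap_fst_nonpos hlam.le (hrA hx)))
    · calc W x ^ q ≤ (2 * (ℓ * V x ^ σ)) ^ q :=
            rpow_le_rpow (hWpos x).le (hWball x hx).2.2 (by linarith)
        _ = (2 * ℓ) ^ q * V x ^ s := by
            rw [← mul_assoc, mul_rpow (by positivity) (rpow_nonneg (h.pos_snd x).le _),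
              ← rpow_mul (h.pos_snd x).le, hσq]
  · exact h.integral_mul_rpow_le_add hA hη hrA hS h.contDiff_snd h.pos_snd
      (hU.rpow_const fun x => Or.inl (h.pos_fst x).ne') (fun x hx => (h.neg_lap_snd x (hrA hx)).le)
      hs hω hωUV fun x _ => (one_mul _).ge

theorem exists_forall_setIntegral_ball_le (hN : 1 ≤ N) (hp : 0 < p) (hpθ : p ≤ θ) (hθ : 1 ≤ θ)
    (hlam : 0 < lam) (hgam : 0 < gam) (hs : (p + 1) / 2 < s) (hL : Lpoly p θ s < 0) :
    ∃ C : ℝ, ∀ {U V : 𝔼 N → ℝ} {y : 𝔼 N} {r : ℝ}, 0 < r →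
      IsStableLaneEmden (ball y (16 * r)) lam gam p θ U V →
      ∫ x in ball y r, V x ^ (s - 1) * U x ^ θ
        ≤ C * ((∫ x in closedBall y (2 * r), V x ^ s) / r ^ 2) := by
  have hθ0 : 0 < θ := by linarith
  have hs1 := one_lt_of_Lpoly_neg hp hθ hs hL
  have := sub_pos.2 hs1
  obtain ⟨q, δ, σ, ℓ, hq, hδ0, hδ1, hqs, hqδ, hsδ, hσ0, hσ1, hσ, hσq, hℓ, hℓσ⟩ :=
    exists_exponents hp hpθ hlam hgam hs hs1
  have := sub_pos.2 hq
  obtain ⟨b, κ, c₀, B, hb, hκ, hc₀, hB, hyoung, hsplit⟩ := exists_absorption_constants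
    (by positivity) (by positivity) (mul_lt_one_of_Lpoly_neg hp hθ0 hlam hgam hs1 hq hqs hL)
    hδ0 hδ1 hθ0
  obtain ⟨c, hc, hharnack⟩ := exists_pos_forall_le_add_rpow_and_mul_rpow_le hN hθ0.le
  obtain ⟨K, hcutoff⟩ := exists_forall_isCutoff N
  obtain ⟨D₁, D₂, htrunc⟩ := exists_forall_exists_truncation_integral_le (N := N) K hlam hgam hp hθ
    hq hs1 hℓ hσq
  set c₂ := s ^ 2 / (4 * (s - 1)) * (gam / √(lam * gam * p * θ))
  refine ⟨b * ((D₁ + κ * (c₂ * (B / (c * gam)) + D₂)) / c₀) + B / (c * gam),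
    fun {U V y r} hr h => ?_⟩
  obtain ⟨J, hJ, hUV⟩ := hharnack hlam.le hgam.le hℓ hσ0.le hσ1 hσ hℓσ hr h.toIsLaneEmden
  obtain ⟨η, hη⟩ := hcutoff y r hr
  obtain ⟨W, hW, hWpos, hUW, hX, hY⟩ := htrunc isOpen_ball h hη
    (closedBall_subset_ball (by linarith)) hJ fun x hx => (hUV x hx).1
  have hU := h.contDiff_fst.continuous
  have hV := h.contDiff_snd.continuous
  have hUθ : ∀ x ∈ closedBall y (2 * r), U x ^ θ ≤ b * W x ^ θ + B / (c * gam) * (V x / r ^ 2) :=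
    fun x hx => by
      refine (hsplit (h.pos_fst x).le (hWpos x).le hJ.le (hUW x hx)).trans ?_
      rw [div_mul_div_comm, mul_div_assoc]
      gcongr
      exact (le_div_iff₀' (by positivity)).2 (hUV x hx).2
  refine (hη.setIntegral_ball_le_integral ?_ fun x => ?_).trans
    (le_mul_of_mul_add_le hb.le hκ.le (by positivity) hc₀
      (hη.mul_integral_add_mul_integral_le hW hWpos hV h.pos_snd hqδ hsδ hyoung) hX hY
      (hη.integral_mul_rpow_le_mul_integral_add hU h.pos_fst hW hWpos hV h.pos_snd
        (by positivity) hUθ))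
  · exact (hV.rpow_const fun x => Or.inl (h.pos_snd x).ne').mul
      (hU.rpow_const fun x => Or.inl (h.pos_fst x).ne')
  · exact mul_nonneg (rpow_nonneg (h.pos_snd x).le _) (rpow_nonneg (h.pos_fst x).le _)

end LocalEstimate

section Covering

lemma setIntegral_iUnion_le_sum {α ι : Type*} [MeasurableSpace α] {μ : Measure α} [Fintype ι]
    {f : α → ℝ} {s : ι → Set α} (hf0 : ∀ x, 0 ≤ f x) (hf : ∀ i, IntegrableOn f (s i) μ) :
    ∫ x in ⋃ i, s i, f x ∂μ ≤ ∑ i, ∫ x in s i, f x ∂μ := by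
  rw [← integral_finsetSum_measure fun i _ => hf i, ← Measure.sum_fintype]
  refine integral_mono_measure Measure.restrict_iUnion_le (.of_forall hf0) ?_
  rw [Measure.sum_fintype]
  exact integrable_finsetSum_measure.2 fun i _ => hf i

lemma exists_finset_forall_ball_half_subset (N : ℕ) : ∃ t : Finset (𝔼 N), (∀ z ∈ t, ‖z‖ ≤ 1 / 2) ∧
    ∀ (y : 𝔼 N) {R : ℝ}, 0 < R → ball y (R / 2) ⊆ ⋃ z : t, ball (y + R • z.1) (R / 40) := by
  obtain ⟨t, hts, htf, hcov⟩ :=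
    (isCompact_closedBall (0 : 𝔼 N) (1 / 2)).finite_cover_balls (e := 1 / 40) (by norm_num)
  refine ⟨htf.toFinset, fun z hz => mem_closedBall_zero_iff.1 (hts (htf.mem_toFinset.1 hz)),
    fun y R hR x hx => ?_⟩
  have hscale (z : 𝔼 N) : dist x (y + R • z) = R * dist (R⁻¹ • (x - y)) z := by
    rw [← abs_of_pos hR, ← norm_eq_abs, ← dist_smul₀, norm_of_nonneg hR.le,
      smul_inv_smul₀ hR.ne', dist_eq_norm, dist_eq_norm, sub_sub]
  have hmem : R⁻¹ • (x - y) ∈ closedBall (0 : 𝔼 N) (1 / 2) := by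
    have := hscale 0
    rw [smul_zero, add_zero] at this
    rw [mem_closedBall]
    nlinarith [mem_ball.1 hx]
  obtain ⟨z, hz, hxz⟩ := mem_iUnion₂.1 (hcov hmem)
  refine mem_iUnion.2 ⟨⟨z, htf.mem_toFinset.2 hz⟩, ?_⟩
  rw [mem_ball, hscale]
  nlinarith [mem_ball.1 hxz]

lemma exists_nat_forall_setIntegral_ball_half_le (N : ℕ) : ∃ n : ℕ, ∀ {f g : 𝔼 N → ℝ} {y : 𝔼 N}
    {R C : ℝ}, Continuous f → (∀ x, 0 ≤ f x) → Continuous g → (∀ x, 0 ≤ g x) → 0 < R →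
    (∀ z, ball z (16 * (R / 40)) ⊆ ball y R →
      ∫ x in ball z (R / 40), f x ≤ C * ∫ x in closedBall z (2 * (R / 40)), g x) →
    ∫ x in ball y (R / 2), f x ≤ n * |C| * ∫ x in ball y R, g x := by
  obtain ⟨t, ht, hcov⟩ := exists_finset_forall_ball_half_subset N
  refine ⟨t.card, fun {f g y R C} hf hf0 hg hg0 hR hlocal => ?_⟩
  have hfball (z : 𝔼 N) (r : ℝ) : IntegrableOn f (ball z r) :=
    (hf.continuousOn.integrableOn_compact (isCompact_closedBall z r)).mono_set
      ball_subset_closedBall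
  have hgball : IntegrableOn g (ball y R) :=
    (hg.continuousOn.integrableOn_compact (isCompact_closedBall y R)).mono_set
      ball_subset_closedBall
  have hball (z : t) : ∫ x in ball (y + R • z.1) (R / 40), f x ≤ |C| * ∫ x in ball y R, g x := by
    have hsub : ball (y + R • z.1) (16 * (R / 40)) ⊆ ball y R := ball_subset_ball' <| by
      rw [dist_self_add_left, norm_smul, norm_of_nonneg hR.le]
      nlinarith [ht z z.2]
    refine (hlocal _ hsub).trans ?_
    gcongr
    · exact setIntegral_nonneg measurableSet_closedBall fun x _ => hg0 x
    · exact le_abs_self C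
    · exact .of_forall hg0
    · exact (closedBall_subset_ball (by linarith)).trans hsub
  calc ∫ x in ball y (R / 2), f x ≤ ∫ x in ⋃ z : t, ball (y + R • z.1) (R / 40), f x :=
        setIntegral_mono_set (integrableOn_finite_iUnion.2 fun z => hfball _ _)
          (.of_forall hf0) (.of_forall (hcov y hR))
    _ ≤ ∑ z : t, ∫ x in ball (y + R • z.1) (R / 40), f x :=
        setIntegral_iUnion_le_sum hf0 fun z => hfball _ _
    _ ≤ ∑ _z : t, |C| * ∫ x in ball y R, g x := Finset.sum_le_sum fun z _ => hball z
    _ = t.card * |C| * ∫ x in ball y R, g x := by simp [mul_assoc]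

end Covering

section Globalization

variable {N : ℕ} {Ω : Set (𝔼 N)} {lam gam p θ R : ℝ} {u v U : 𝔼 N → ℝ} {x y : 𝔼 N}

lemma exists_contDiff_eqOn_add_one (hΩ : IsOpen Ω) (hR : 0 < R) (hyΩ : closedBall y R ⊆ Ω)
    (hu : ContDiffOn ℝ 2 u Ω) (hpos : ∀ x ∈ Ω, 0 < u x) :
    ∃ U, ContDiff ℝ 2 U ∧ (∀ x, 0 < U x) ∧ EqOn U (fun x => u x + 1) (ball y R) := by
  obtain ⟨δ, hδ, hthick⟩ := (isCompact_closedBall y R).exists_thickening_subset_open hΩ hyΩ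
  rw [thickening_closedBall hδ hR.le] at hthick
  let χ : ContDiffBump y := ⟨R, R + δ / 2, hR, by linarith⟩
  have hχΩ : tsupport χ ⊆ Ω := by
    rw [χ.tsupport_eq]
    have hδR : R + δ / 2 < δ + R := by linarith
    exact (closedBall_subset_ball hδR).trans hthick
  refine ⟨fun x => χ x * u x + 1, contDiff_iff_contDiffAt.2 fun x => ?_, fun x => ?_,
    fun x hx => ?_⟩
  · refine ContDiffAt.add ?_ contDiffAt_const
    by_cases hx : x ∈ tsupport χ
    · exact χ.contDiffAt.mul (hu.contDiffAt (hΩ.mem_nhds (hχΩ hx)))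
    · have hzero : (fun z => χ z * u z) =ᶠ[nhds x] fun _ => 0 :=
        (notMem_tsupport_iff_eventuallyEq.1 hx).mono fun z hz => by simp [hz]
      exact contDiffAt_const.congr_of_eventuallyEq hzero
  · by_cases hx : x ∈ tsupport χ
    · have := mul_nonneg (χ.nonneg (x := x)) (hpos x (hχΩ hx)).le
      linarith
    · simp [image_eq_zero_of_notMem_tsupport hx]
  · simp [χ.one_of_mem_closedBall (ball_subset_closedBall hx)]

lemma lap_eq_of_eqOn_add_one (hΩ : IsOpen Ω) (hUu : EqOn U (fun x => u x + 1) Ω) (hx : x ∈ Ω) :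
    lap U x = lap u x := by
  rw [lap_congr (hUu.eventuallyEq_of_mem (hΩ.mem_nhds hx))]
  simp only [lap, fderiv_add_const]

lemma exists_isStableLaneEmden (hΩ : IsOpen Ω) (hsol : IsSolution Ω lam gam p θ u v)
    (hst : IsStable Ω lam gam p θ u v) (hR : 0 < R) (hyΩ : closedBall y R ⊆ Ω) :
    ∃ U V, IsStableLaneEmden (ball y R) lam gam p θ U V ∧
      EqOn U (fun x => u x + 1) (ball y R) ∧ EqOn V (fun x => v x + 1) (ball y R) := by
  obtain ⟨hu, hv, hupos, hvpos, hlapu, hlapv⟩ := hsol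
  obtain ⟨U, hU, hUpos, hUu⟩ := exists_contDiff_eqOn_add_one hΩ hR hyΩ hu hupos
  obtain ⟨V, hV, hVpos, hVv⟩ := exists_contDiff_eqOn_add_one hΩ hR hyΩ hv hvpos
  have hball : ball y R ⊆ Ω := ball_subset_closedBall.trans hyΩ
  refine ⟨U, V, ⟨⟨hU, hV, hUpos, hVpos, fun x hx => ?_, fun x hx => ?_⟩, fun φ hφ => ?_⟩, hUu, hVv⟩
  · rw [lap_eq_of_eqOn_add_one isOpen_ball hUu hx, hlapu x (hball hx), hVv hx]
  · rw [lap_eq_of_eqOn_add_one isOpen_ball hVv hx, hlapv x (hball hx), hUu hx]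
  · have hφΩ := hφ.2.2.trans hball
    have hstable := hst φ ⟨hφ.1, hφ.2.1, hφΩ⟩
    rw [setIntegral_eq_integral_of_forall_compl_eq_zero fun x hx => by
      simp [image_eq_zero_of_notMem_tsupport fun h => hx (hφΩ h)],
      setIntegral_eq_integral_of_forall_compl_eq_zero fun x hx => by
      simp [gradient_eq_zero_of_notMem_tsupport fun h => hx (hφΩ h)]] at hstable
    convert hstable using 4 with x
    by_cases hx : x ∈ tsupport φ
    · rw [stabilityWeight, hUu (hφ.2.2 hx), hVv (hφ.2.2 hx)]
    · simp [image_eq_zero_of_notMem_tsupport hx]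

end Globalization

theorem stmt16_general {N : ℕ} {p θ lam gam s : ℝ} (hN : 1 ≤ N) (hp : 0 < p) (hpθ : p ≤ θ)
    (hθ : 1 ≤ θ) (hlam : 0 < lam) (hgam : 0 < gam) (hs : (p + 1) / 2 < s) (hL : Lpoly p θ s < 0) :
    ∃ C : ℝ, ∀ Ω : Set (𝔼 N), IsOpen Ω → ∀ u v : 𝔼 N → ℝ,
      IsSolution Ω lam gam p θ u v → IsStable Ω lam gam p θ u v →
      ∀ (y : 𝔼 N) (R : ℝ), 0 < R → closedBall y R ⊆ Ω →
        ∫ x in ball y (R / 2), (u x + 1) ^ θ * (v x + 1) ^ (s - 1)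
          ≤ C / R ^ 2 * ∫ x in ball y R, (v x + 1) ^ s := by
  obtain ⟨C, hC⟩ := exists_forall_setIntegral_ball_le hN hp hpθ hθ hlam hgam hs hL
  obtain ⟨n, hn⟩ := exists_nat_forall_setIntegral_ball_half_le N
  refine ⟨n * |C * 1600|, fun Ω hΩ u v hsol hst y R hR hyΩ => ?_⟩
  obtain ⟨U, V, h, hUu, hVv⟩ := exists_isStableLaneEmden hΩ hsol hst hR hyΩ
  have hU (a : ℝ) : Continuous fun x => U x ^ a :=
    h.contDiff_fst.continuous.rpow_const fun x => Or.inl (h.pos_fst x).ne'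
  have hV (a : ℝ) : Continuous fun x => V x ^ a :=
    h.contDiff_snd.continuous.rpow_const fun x => Or.inl (h.pos_snd x).ne'
  have hcover := hn (y := y) (C := C * 1600 / R ^ 2) ((hV (s - 1)).mul (hU θ))
    (fun x => mul_nonneg (rpow_nonneg (h.pos_snd x).le _) (rpow_nonneg (h.pos_fst x).le _)) (hV s)
    (fun x => rpow_nonneg (h.pos_snd x).le s) hR fun z hz =>
      (hC (by positivity) (h.mono hz)).trans_eq (by ring)
  rw [abs_div, abs_of_nonneg (sq_nonneg R), ← mul_div_assoc] at hcover
  calc _ = ∫ x in ball y (R / 2), V x ^ (s - 1) * U x ^ θ :=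
        setIntegral_congr_fun measurableSet_ball fun x hx => by
          have hxR : x ∈ ball y R := ball_subset_ball (by linarith) hx
          simp only [hUu hxR, hVv hxR, mul_comm]
    _ ≤ n * |C * 1600| / R ^ 2 * ∫ x in ball y R, V x ^ s := hcover
    _ = _ := by
        rw [setIntegral_congr_fun measurableSet_ball fun x hx => by rw [hVv hx]]

/-- local integral estimate for stable solutions on balls. -/
theorem stmt16 {N : ℕ} (hN : 1 ≤ N) (Ω : Set (EuclideanSpace ℝ (Fin N))) (hΩ : IsOpen Ω)
    (p θ lam gam s : ℝ) (hp : 1 < p) (hpθ : p ≤ θ) (hlam : 0 < lam) (hgam : 0 < gam)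
    (hs : (p + 1) / 2 < s) (hL : Lpoly p θ s < 0) :
    ∃ C : ℝ, ∀ u v : EuclideanSpace ℝ (Fin N) → ℝ,
      IsSolution Ω lam gam p θ u v → IsStable Ω lam gam p θ u v →
      ∀ (y : EuclideanSpace ℝ (Fin N)) (R : ℝ), 0 < R → closedBall y R ⊆ Ω →
        ∫ x in ball y (R / 2), (u x + 1) ^ θ * (v x + 1) ^ (s - 1)
          ≤ C / R ^ 2 * ∫ x in ball y R, (v x + 1) ^ s := by
  obtain ⟨C, hC⟩ := stmt16_general hN (by linarith) hpθ (by linarith) hlam hgam hs hL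
  exact ⟨C, hC Ω hΩ⟩
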